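/- arXiv:math/0303330 — 3 statements merged into one kernel-verified Lean document; each statement's English description precedes it below -/
import Mathlib

section
/- Let $p \geq q \geq 1$ be natural numbers. In the polynomial ring $R = \mathbb{C}[x_{ij} : 1 \leq i \leq p, 1 \leq j \leq q]$, consider the generic $p \times q$ matrix $X = (x_{ij})$ and let $I \subset R$ be the ideal generated by all $q \times q$ minors of $X$ (the determinants of the $q \times q$ submatrices obtained by choosing $q$ of the $p$ rows). Then $I$ is a prime ideal of $R$. -/
/-- The generic `p × q` matrix over `ℂ`, whose entries are the variables of the
polynomial ring `ℂ[x_{ij}]`. -/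
noncomputable def genericMatrix (p q : ℕ) :
    Matrix (Fin p) (Fin q) (MvPolynomial (Fin p × Fin q) ℂ) :=
  Matrix.of fun i j => MvPolynomial.X (i, j)

/-- The ideal generated by all maximal (`q × q`) minors of the generic `p × q` matrix. -/
noncomputable def maximalMinorsIdeal (p q : ℕ) : Ideal (MvPolynomial (Fin p × Fin q) ℂ) :=
  Ideal.span (Set.range fun σ : Fin q ↪ Fin p => ((genericMatrix p q).submatrix σ id).det)

/-- The weight of an exponent vector. -/
def mmWt {p q : ℕ} (m : Fin p × Fin q →₀ ℕ) : ℕ := ∑ s, m s * (s.1.val * s.2.val)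

lemma mmWt_add {p q : ℕ} (m n : Fin p × Fin q →₀ ℕ) : mmWt (m + n) = mmWt m + mmWt n := by
  simp [mmWt, add_mul, Finset.sum_add_distrib]

/-- Standard exponent vectors: not divisible by the diagonal term of a minor. -/
def mmStd {p q : ℕ} (m : Fin p × Fin q →₀ ℕ) : Prop :=
  ¬ ∃ σ : Fin q → Fin p, StrictMono σ ∧ ∀ k, m (σ k, k) ≠ 0

/-- Exponent vector of the term of a minor. -/
noncomputable def mmTerm {p q : ℕ} (σ : Fin q → Fin p) : Fin p × Fin q →₀ ℕ :=
  ∑ k, Finsupp.single (σ k, k) 1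

lemma mmWt_term {p q : ℕ} (σ : Fin q → Fin p) :
    mmWt (mmTerm σ) = ∑ k, (σ k).val * k.val := by
  unfold mmWt mmTerm
  simp only [Finsupp.finsetSum_apply, Finset.sum_mul]
  rw [Finset.sum_comm]
  refine Finset.sum_congr rfl fun k _ => ?_
  rw [Finset.sum_eq_single (σ k, k)]
  · simp
  · intro b _ hb
    rw [Finsupp.single_eq_of_ne hb, zero_mul]
  · simp

lemma mmTerm_le {p q : ℕ} (σ : Fin q → Fin p) (m : Fin p × Fin q →₀ ℕ)
    (h : ∀ k, m (σ k, k) ≠ 0) : mmTerm σ ≤ m := by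
  rintro ⟨i, j⟩
  unfold mmTerm
  simp only [Finsupp.finsetSum_apply]
  rw [Finset.sum_eq_single j]
  · by_cases hi : σ j = i
    · subst hi
      simpa using Nat.one_le_iff_ne_zero.mpr (h j)
    · rw [Finsupp.single_eq_of_ne]
      · exact Nat.zero_le _
      · intro hh
        exact hi (congrArg Prod.fst hh).symm
  · intro b _ hb
    rw [Finsupp.single_eq_of_ne]
    intro hh
    exact hb (congrArg Prod.snd hh).symm
  · simp

lemma mmWt_perm_lt {p q : ℕ} (σ : Fin q → Fin p) (hσ : StrictMono σ) (τ : Equiv.Perm (Fin q))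
    (hτ : τ ≠ 1) : mmWt (mmTerm fun k => σ (τ k)) < mmWt (mmTerm σ) := by
  rw [mmWt_term, mmWt_term]
  have hmono : Monovary (fun k => (σ k).val) (fun k : Fin q => k.val) := by
    intro a b hab
    exact (hσ (show a < b from hab)).le
  refine (Monovary.sum_comp_perm_mul_lt_sum_mul_iff (σ := τ) hmono).mpr ?_
  intro hm
  apply hτ
  have hst : StrictMono τ := by
    intro a b hab
    have h1 : σ (τ a) ≤ σ (τ b) := hm hab
    have h2 := hσ.le_iff_le.mp h1
    exact lt_of_le_of_ne h2 (fun h => hab.ne (τ.injective h))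
  ext k
  have := Subsingleton.elim (hst.orderIsoOfSurjective τ τ.surjective) (OrderIso.refl _)
  have h3 := congrArg (fun f => f k) this
  simpa using congrArg Fin.val h3

lemma mm_prod_term {p q : ℕ} (σ : Fin q → Fin p) :
    ∏ k, (MvPolynomial.X (σ k, k) : MvPolynomial (Fin p × Fin q) ℂ)
      = MvPolynomial.monomial (mmTerm σ) 1 := by
  unfold mmTerm
  rw [MvPolynomial.monomial_sum_one]
  rfl

lemma mm_span {p q : ℕ} : ∀ (n : ℕ) (m : Fin p × Fin q →₀ ℕ), mmWt m = n →
    MvPolynomial.monomial m (1 : ℂ) ∈ (maximalMinorsIdeal p q).restrictScalars ℂ ⊔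
      MvPolynomial.restrictSupport ℂ {m | mmStd m} := by
  intro n
  induction n using Nat.strong_induction_on with
  | _ n ih =>
  intro m hm
  by_cases hs : mmStd m
  · apply Submodule.mem_sup_right
    rw [MvPolynomial.mem_restrictSupport_iff]
    intro a ha
    have := MvPolynomial.support_monomial_subset ha
    simp at this
    subst this
    exact hs
  · simp only [mmStd, not_not] at hs
    obtain ⟨σ, hσ, hk⟩ := hs
    obtain ⟨m', rfl⟩ := exists_add_of_le (mmTerm_le σ m hk)
    have hdet : ((genericMatrix p q).submatrix σ id).det =
        ∑ τ : Equiv.Perm (Fin q), Equiv.Perm.sign τ •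
          MvPolynomial.monomial (mmTerm fun k => σ (τ k)) (1 : ℂ) := by
      rw [Matrix.det_apply]
      refine Finset.sum_congr rfl fun τ _ => ?_
      rw [← mm_prod_term]
      simp [genericMatrix]
    have hmem : MvPolynomial.monomial m' (1 : ℂ) * ((genericMatrix p q).submatrix σ id).det ∈
        maximalMinorsIdeal p q := by
      apply Ideal.mul_mem_left
      exact Ideal.subset_span ⟨⟨σ, hσ.injective⟩, rfl⟩
    have key : MvPolynomial.monomial (mmTerm σ + m') (1 : ℂ) =
        MvPolynomial.monomial m' (1 : ℂ) * ((genericMatrix p q).submatrix σ id).det -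
        ∑ τ ∈ Finset.univ.erase (1 : Equiv.Perm (Fin q)), Equiv.Perm.sign τ •
          MvPolynomial.monomial ((mmTerm fun k => σ (τ k)) + m') (1 : ℂ) := by
      rw [hdet, ← Finset.add_sum_erase _ _ (Finset.mem_univ 1), mul_add, Finset.mul_sum]
      have : ∀ τ : Equiv.Perm (Fin q), MvPolynomial.monomial m' (1 : ℂ) * (Equiv.Perm.sign τ •
          MvPolynomial.monomial (mmTerm fun k => σ (τ k)) (1 : ℂ)) = Equiv.Perm.sign τ •
          MvPolynomial.monomial ((mmTerm fun k => σ (τ k)) + m') (1 : ℂ) := by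
        intro τ
        rw [mul_smul_comm, MvPolynomial.monomial_mul, one_mul, add_comm m']
      simp only [this]
      simp
    rw [key]
    apply Submodule.sub_mem
    · exact Submodule.mem_sup_left hmem
    · apply Submodule.sum_mem
      intro τ hτ
      rw [Units.smul_def]
      apply zsmul_mem
      refine ih _ ?_ _ rfl
      rw [← hm, mmWt_add, mmWt_add]
      have := mmWt_perm_lt σ hσ τ (Finset.ne_of_mem_erase hτ)
      omega

lemma mm_span_all {p q : ℕ} (f : MvPolynomial (Fin p × Fin q) ℂ) :
    ∃ g, f - g ∈ maximalMinorsIdeal p q ∧ ∀ m ∈ g.support, mmStd m := by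
  have : f ∈ (maximalMinorsIdeal p q).restrictScalars ℂ ⊔
      MvPolynomial.restrictSupport ℂ {m | mmStd m} := by
    rw [f.as_sum]
    apply Submodule.sum_mem
    intro m _
    have := Submodule.smul_mem _ (f.coeff m) (mm_span _ m rfl)
    rwa [MvPolynomial.smul_monomial, smul_eq_mul, mul_one] at this
  obtain ⟨a, ha, g, hg, rfl⟩ := Submodule.mem_sup.mp this
  refine ⟨g, by simpa using ha, ?_⟩
  intro m hm
  exact (MvPolynomial.mem_restrictSupport_iff _).mp hg hm

/-- The greedy chain. -/
lemma mm_greedy (T : ℕ → ℕ → Prop) (p : ℕ) : ∃ (k : ℕ) (a : ℕ → ℕ),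
    (∀ j j', j < j' → j' < k → a j < a j') ∧ (∀ j < k, a j < p ∧ T (a j) j) ∧
    ∀ i < p, ∃ h ≤ k, (∀ j < h, a j < i) ∧ (∀ j, h ≤ j → j < k → i ≤ a j) ∧
      (T i h → h < k ∧ i = a h) ∧ (¬ T i h → h < k → i < a h) := by
  induction p with
  | zero => exact ⟨0, fun _ => 0, by simp, by simp, by simp⟩
  | succ p ih =>
    obtain ⟨k, a, h1, h2, h3⟩ := ih
    by_cases hT : T p k
    · have ha : ∀ j < k, Function.update a k p j = a j := fun j hj => by
        rw [Function.update_of_ne hj.ne]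
      have hk : Function.update a k p k = p := Function.update_self ..
      refine ⟨k + 1, Function.update a k p, ?_, ?_, ?_⟩
      · intro j j' hj hj'
        rw [ha j (by omega)]
        rcases Nat.lt_succ_iff_lt_or_eq.mp hj' with h | rfl
        · rw [ha _ h]; exact h1 _ _ hj h
        · rw [hk]; exact (h2 j hj).1
      · intro j hj
        rcases Nat.lt_succ_iff_lt_or_eq.mp hj with h | rfl
        · rw [ha _ h]; exact ⟨by have := (h2 j h).1; omega, (h2 j h).2⟩
        · rw [hk]; exact ⟨by omega, hT⟩
      · intro i hi
        rcases Nat.lt_succ_iff_lt_or_eq.mp hi with hi | rfl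
        · obtain ⟨h, hh, g1, g2, g3, g4⟩ := h3 i hi
          refine ⟨h, by omega, ?_, ?_, ?_, ?_⟩
          · intro j hj; rw [ha j (by omega)]; exact g1 j hj
          · intro j hj hj'
            rcases Nat.lt_succ_iff_lt_or_eq.mp hj' with h | rfl
            · rw [ha _ h]; exact g2 _ hj h
            · rw [hk]; omega
          · intro ht
            have := g3 ht
            rw [ha _ this.1]
            exact ⟨by omega, this.2⟩
          · intro ht hh'
            rcases Nat.lt_succ_iff_lt_or_eq.mp hh' with h | rfl
            · rw [ha _ h]; exact g4 ht h
            · rw [hk]; omega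
        · refine ⟨k, by omega, ?_, ?_, ?_, ?_⟩
          · intro j hj; rw [ha j hj]; exact (h2 j hj).1
          · intro j hj hj'
            obtain rfl : j = k := by omega
            rw [hk]
          · intro _; rw [hk]; exact ⟨by omega, rfl⟩
          · intro h; exact absurd hT h
    · refine ⟨k, a, h1, fun j hj => ⟨by have := (h2 j hj).1; omega, (h2 j hj).2⟩, ?_⟩
      intro i hi
      rcases Nat.lt_succ_iff_lt_or_eq.mp hi with hi | rfl
      · exact h3 i hi
      · exact ⟨k, le_rfl, fun j hj => (h2 j hj).1, fun j hj hj' => by omega,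
          fun h => absurd h hT, fun _ h => by omega⟩

lemma mm_exp_le (a : ℕ → ℕ) (i h d : ℕ) (hle : ∀ e < d, i ≤ a (h + e)) :
    (∑ j ∈ Finset.range h, a j) + i * d ≤ ∑ j ∈ Finset.range (h + d), a j := by
  rw [Finset.sum_range_add]
  have := Finset.sum_le_sum (s := Finset.range d) (f := fun _ => i) (g := fun e => a (h + e))
    (fun e he => hle e (Finset.mem_range.mp he))
  simp only [Finset.sum_const, Finset.card_range, smul_eq_mul] at this
  rw [mul_comm] at this
  omega

lemma mm_exp_lt (a : ℕ → ℕ) (i h d : ℕ) (hle : ∀ e < d, i ≤ a (h + e))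
    (hlt : ∃ e < d, i < a (h + e)) :
    (∑ j ∈ Finset.range h, a j) + i * d < ∑ j ∈ Finset.range (h + d), a j := by
  rw [Finset.sum_range_add]
  obtain ⟨e, he, hlt⟩ := hlt
  have := Finset.sum_lt_sum (s := Finset.range d) (f := fun _ => i) (g := fun e => a (h + e))
    (fun e he => hle e (Finset.mem_range.mp he)) ⟨e, Finset.mem_range.mpr he, hlt⟩
  simp only [Finset.sum_const, Finset.card_range, smul_eq_mul] at this
  rw [mul_comm] at this
  omega

lemma mm_exp_gt (a : ℕ → ℕ) (i h d : ℕ) (hd : 0 < d) (hlt : ∀ e < d, a (h + e) < i) :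
    ∑ j ∈ Finset.range (h + d), a j < (∑ j ∈ Finset.range h, a j) + i * d := by
  rw [Finset.sum_range_add]
  have := Finset.sum_lt_sum_of_nonempty (s := Finset.range d) (g := fun _ => i)
    (f := fun e => a (h + e)) (Finset.nonempty_range_iff.mpr hd.ne')
    (fun e he => hlt e (Finset.mem_range.mp he))
  simp only [Finset.sum_const, Finset.card_range, smul_eq_mul] at this
  rw [mul_comm d i] at this
  omega

/-- The exponents along a row. -/
lemma mm_exponent (a : ℕ → ℕ) (k i h : ℕ) (h1 : ∀ j j', j < j' → j' < k → a j < a j')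
    (g1 : ∀ j < h, a j < i) (g2 : ∀ j, h ≤ j → j < k → i ≤ a j) (j : ℕ) (hj : j ≤ k) :
    ∃ n, (∑ j ∈ Finset.range j, a j) + i * h = (∑ j ∈ Finset.range h, a j) + i * j + n ∧
      (j = h + 1 → i = a h → n = 0) ∧
      (j ≠ h → (h < k → i < a h) → 0 < n) ∧ (j ≠ h → j ≠ h + 1 → 0 < n) := by
  rcases lt_trichotomy j h with hlt | rfl | hgt
  · obtain ⟨d, rfl⟩ := Nat.exists_eq_add_of_lt hlt
    have := mm_exp_gt a i j (d + 1) (by omega) (fun e he => g1 _ (by omega))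
    rw [← add_assoc] at this
    refine ⟨(∑ j ∈ Finset.range j, a j) + i * (d + 1)
      - ∑ j ∈ Finset.range (j + d + 1), a j, ?_, by omega, by omega, by omega⟩
    have e : i * (j + d + 1) = i * j + i * (d + 1) := by ring
    omega
  · exact ⟨0, by omega, by simp, by simp, by simp⟩
  · obtain ⟨d, rfl⟩ := Nat.exists_eq_add_of_lt hgt
    have hle : ∀ e < d + 1, i ≤ a (h + e) := fun e he => g2 _ (by omega) (by omega)
    have := mm_exp_le a i h (d + 1) hle
    rw [← add_assoc] at this
    refine ⟨(∑ j ∈ Finset.range (h + d + 1), a j)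
      - ((∑ j ∈ Finset.range h, a j) + i * (d + 1)), ?_, ?_, ?_, ?_⟩
    · have e : i * (h + d + 1) = i * h + i * (d + 1) := by ring
      omega
    · intro hd hi
      obtain rfl : d = 0 := by omega
      simp [Finset.sum_range_succ, hi]
    · intro _ hi
      have := mm_exp_lt a i h (d + 1) hle ⟨0, by omega, hi (by omega)⟩
      rw [← add_assoc] at this
      omega
    · intro _ hd
      have := mm_exp_lt a i h (d + 1) hle ⟨1, by omega, by
        have h3 := h1 h (h + 1) (by omega) (by omega)
        have h4 := g2 h le_rfl (by omega)
        omega⟩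
      rw [← add_assoc] at this
      omega

lemma mm_curve {p q : ℕ} (hq : 0 < q) (m : Fin p × Fin q →₀ ℕ) (hm : mmStd m) :
    ∃ S : Set (Fin p × Fin q), (∀ s, m s ≠ 0 → s ∈ S) ∧
      ∀ c : Fin p × Fin q → ℂ, (∀ s, c s ≠ 0) →
        ∃ (u : Fin p × Fin q → Polynomial ℂ) (lam : ℂ → Fin q → ℂ),
          (∀ s ∈ S, (u s).eval 0 = c s) ∧ (∀ s ∉ S, (u s).eval 0 = 0) ∧
          ∀ t : ℂ, t ≠ 0 → lam t ⟨0, hq⟩ ≠ 0 ∧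
            ∀ i : Fin p, ∑ j : Fin q, lam t j *
              ((t ^ (i.val * j.val))⁻¹ * (u (i, j)).eval t) = 0 := by
  classical
  obtain ⟨k, a, h1, h2, h3⟩ := mm_greedy
    (fun i j => ∃ (hi : i < p) (hj : j < q), m (⟨i, hi⟩, ⟨j, hj⟩) ≠ 0) p
  have hkq : k < q := by
    by_contra hcon
    push Not at hcon
    refine hm ⟨fun j => ⟨a j, (h2 j (by omega)).1⟩, ?_, ?_⟩
    · intro x y hxy
      exact h1 x y hxy (by omega)
    · intro j
      obtain ⟨_, _, _, h⟩ := h2 j (by omega)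
      exact h
  choose! h hhk g1 g2 g3 g4 using h3
  have hex : ∀ i < p, ∀ j ≤ k, _ := fun i hi j hj =>
    mm_exponent a k i (h i) h1 (g1 i hi) (g2 i hi) j hj
  choose! n n1 n2 n3 n4 using hex
  refine ⟨{s | m s ≠ 0 ∨ s.2.val ≠ h s.1.val}, fun s hs => Or.inl hs, ?_⟩
  intro c hc
  obtain ⟨C, hCne, hC⟩ : ∃ C : ℕ → ℕ → ℂ, (∀ i j, C i j ≠ 0) ∧
      ∀ (i : Fin p) (j : Fin q), C i j = c (i, j) := by
    refine ⟨fun i j => if h : i < p ∧ j < q then c (⟨i, h.1⟩, ⟨j, h.2⟩) else 1, ?_, ?_⟩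
    · intro i j
      dsimp only
      split_ifs
      · exact hc _
      · exact one_ne_zero
    · intro i j
      simp
  set μ : ℕ → ℂ := fun j => ∏ j' ∈ Finset.range j, (-(C (a j') j' / C (a j') (j' + 1))) with hμ
  have hμne : ∀ j, μ j ≠ 0 := fun j => Finset.prod_ne_zero_iff.mpr fun j' _ =>
    neg_ne_zero.mpr (div_ne_zero (hCne _ _) (hCne _ _))
  have hμs : ∀ j, μ (j + 1) = μ j * (-(C (a j) j / C (a j) (j + 1))) := fun j => by
    simp only [hμ, Finset.prod_range_succ]
  let r : Fin p → Polynomial ℂ := fun i => -∑ j ∈ Finset.univ.filter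
    (fun j : Fin q => j.val ≤ k ∧ j.val ≠ h i),
      Polynomial.C (μ j / μ (h i) * c (i, j)) * Polynomial.X ^ (n i j)
  let u : Fin p × Fin q → Polynomial ℂ := fun s =>
    if s.2.val = h s.1.val then r s.1 else Polynomial.C (c s)
  refine ⟨u, fun t j => if j.val ≤ k then μ j * t ^ (∑ j' ∈ Finset.range j, a j') else 0,
    ?_, ?_, ?_⟩
  · rintro ⟨i, j⟩ hs
    by_cases hj : j.val = h i.val
    · have hms : m (i, j) ≠ 0 := by
        rcases hs with hs | hs
        · exact hs
        · exact absurd hj hs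
      obtain ⟨hlt, hia⟩ := g3 i i.2 ⟨i.2, by omega, by
        convert hms using 3
        exact Fin.ext hj.symm⟩
      simp only [u, hj, if_true, r, Polynomial.eval_neg, Polynomial.eval_finsetSum,
        Polynomial.eval_mul, Polynomial.eval_C, Polynomial.eval_pow, Polynomial.eval_X]
      rw [Finset.sum_eq_single (⟨h i + 1, by omega⟩ : Fin q)]
      · rw [n2 i i.2 _ (by simp; omega) rfl hia, pow_zero, mul_one, ← hC, ← hC, hj]
        simp only [hμs, ← hia]
        have := hμne (h i)
        have := hCne i (h i + 1)
        field_simp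
      · intro b hb hbne
        simp only [Finset.mem_filter, Finset.mem_univ, true_and] at hb
        have := n4 i i.2 b hb.1 hb.2 (fun hh => hbne (Fin.ext hh))
        rw [zero_pow this.ne', mul_zero]
      · intro hb
        exfalso
        apply hb
        simp
        omega
    · simp [u, hj]
  · rintro ⟨i, j⟩ hs
    simp only [Set.mem_ofPred_eq, not_or, not_not] at hs
    obtain ⟨hms, hj⟩ := hs
    have hlt := g4 i i.2 (by
      rintro ⟨_, _, h'⟩
      apply h'
      convert hms using 3
      exact Fin.ext hj.symm)
    simp only [u, hj, if_true, r, Polynomial.eval_neg, Polynomial.eval_finsetSum,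
        Polynomial.eval_mul, Polynomial.eval_C, Polynomial.eval_pow, Polynomial.eval_X]
    rw [neg_eq_zero]
    apply Finset.sum_eq_zero
    intro b hb
    simp only [Finset.mem_filter, Finset.mem_univ, true_and] at hb
    have := n3 i i.2 b hb.1 hb.2 hlt
    rw [zero_pow this.ne', mul_zero]
  · intro t ht
    refine ⟨by simp [hμne], ?_⟩
    intro i
    have hhq : h i < q := by have := hhk i i.2; omega
    have hn0 : n i (h i) = 0 := by
      have := n1 i i.2 (h i) (hhk i i.2)
      omega
    have hterm : ∀ j : Fin q, (if j.val ≤ k then μ j * t ^ (∑ j' ∈ Finset.range j, a j') else 0) *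
        ((t ^ (i.val * j.val))⁻¹ * (u (i, j)).eval t) =
        (t ^ (∑ j' ∈ Finset.range (h i), a j') * (t ^ (i.val * h i))⁻¹) *
        (if j.val ≤ k then μ j * t ^ n i j * (u (i, j)).eval t else 0) := by
      intro j
      split_ifs with hj
      · have e := congrArg (fun e => t ^ e) (n1 i i.2 j hj)
        simp only [pow_add] at e
        have x1 : t ^ (i.val * j.val) ≠ 0 := pow_ne_zero _ ht
        have x2 : t ^ (i.val * h i) ≠ 0 := pow_ne_zero _ ht
        rw [← div_eq_mul_inv, div_mul_eq_mul_div, ← div_eq_inv_mul, mul_div_assoc', div_eq_div_iff x1 x2]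
        linear_combination (μ j * (u (i, j)).eval t) * e
      · simp
    simp only [hterm]
    rw [← Finset.mul_sum]
    apply mul_eq_zero_of_right
    rw [← Finset.add_sum_erase _ _ (Finset.mem_univ (⟨h i, hhq⟩ : Fin q))]
    have hrest : ∑ j ∈ Finset.univ.erase (⟨h i, hhq⟩ : Fin q),
        (if j.val ≤ k then μ j * t ^ n i j * (u (i, j)).eval t else 0) =
        ∑ j ∈ Finset.univ.filter (fun j : Fin q => j.val ≤ k ∧ j.val ≠ h i),
          μ j * t ^ n i j * c (i, j) := by
      rw [← Finset.sum_filter]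
      refine Finset.sum_congr ?_ ?_
      · ext j
        simp [Fin.ext_iff]
        tauto
      · intro j hj
        simp only [Finset.mem_filter, Finset.mem_univ, true_and] at hj
        simp [u, hj.2]
    rw [hrest]
    simp only [hhk i i.2, if_true, hn0, u, r, Polynomial.eval_neg, Polynomial.eval_finsetSum,
        Polynomial.eval_mul, Polynomial.eval_C, Polynomial.eval_pow, Polynomial.eval_X]
    rw [pow_zero, mul_one, mul_neg, Finset.mul_sum, neg_add_eq_zero]
    refine Finset.sum_congr rfl fun j _ => ?_
    have := hμne (h i)
    field_simp

/-- The parametrization map: the first column is a combination of the others. -/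
noncomputable def mmPhi (p q : ℕ) (hq : 0 < q) : MvPolynomial (Fin p × Fin q) ℂ →ₐ[ℂ]
    MvPolynomial ((Fin p × Fin q) ⊕ Fin q) ℂ :=
  MvPolynomial.aeval fun s => if s.2 = ⟨0, hq⟩ then
    ∑ j ∈ Finset.univ.erase (⟨0, hq⟩ : Fin q),
      MvPolynomial.X (Sum.inr j) * MvPolynomial.X (Sum.inl (s.1, j))
    else MvPolynomial.X (Sum.inl s)

lemma mmPhi_minor (p q : ℕ) (hq : 0 < q) (σ : Fin q → Fin p) :
    mmPhi p q hq ((genericMatrix p q).submatrix σ id).det = 0 := by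
  rw [AlgHom.map_det, ← Matrix.exists_mulVec_eq_zero_iff]
  refine ⟨fun j => if j = ⟨0, hq⟩ then -1 else MvPolynomial.X (Sum.inr j), ?_, ?_⟩
  · intro h
    have := congrFun h ⟨0, hq⟩
    simp at this
  · ext1 i
    simp only [Matrix.mulVec, dotProduct]
    rw [← Finset.add_sum_erase _ _ (Finset.mem_univ (⟨0, hq⟩ : Fin q))]
    simp only [AlgHom.mapMatrix_apply, Matrix.map_apply, Matrix.submatrix_apply, genericMatrix,
      Matrix.of_apply, mmPhi, MvPolynomial.aeval_X, id, if_true, Pi.zero_apply]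
    rw [mul_neg, mul_one, neg_add_eq_zero]
    refine Finset.sum_congr rfl fun j hj => ?_
    have := Finset.ne_of_mem_erase hj
    simp [this, mul_comm]

lemma mmPhi_eval (p q : ℕ) (hq : 0 < q) (f : MvPolynomial (Fin p × Fin q) ℂ)
    (hf : mmPhi p q hq f = 0) (x : Fin p × Fin q → ℂ) (lam : Fin q → ℂ)
    (h0 : lam ⟨0, hq⟩ ≠ 0) (hx : ∀ i, ∑ j, lam j * x (i, j) = 0) :
    MvPolynomial.eval x f = 0 := by
  have key : (MvPolynomial.aeval (R := ℂ) (Sum.elim x (fun j => -(lam j / lam ⟨0, hq⟩)))).comp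
      (mmPhi p q hq) = MvPolynomial.aeval x := by
    apply MvPolynomial.algHom_ext
    rintro ⟨i, j⟩
    simp only [mmPhi, AlgHom.comp_apply, MvPolynomial.aeval_X]
    split_ifs with hj
    · subst hj
      have := hx i
      rw [← Finset.add_sum_erase _ _ (Finset.mem_univ (⟨0, hq⟩ : Fin q))] at this
      simp only [map_sum, map_mul, MvPolynomial.aeval_X, Sum.elim_inr, Sum.elim_inl]
      have e : ∀ j, -(lam j / lam ⟨0, hq⟩) * x (i, j) =
        (-(lam ⟨0, hq⟩)⁻¹) * (lam j * x (i, j)) := fun j => by ring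
      simp only [e]
      rw [← Finset.mul_sum]
      field_simp
      linear_combination -this
    · simp
  have := congrArg (fun φ => φ f) key
  simp only [AlgHom.comp_apply, hf, map_zero] at this
  rw [← MvPolynomial.coe_aeval_eq_eval]
  exact this.symm

lemma mm_std_zero (p q : ℕ) (hq : 0 < q) (g : MvPolynomial (Fin p × Fin q) ℂ)
    (hg : mmPhi p q hq g = 0) (hstd : ∀ m ∈ g.support, mmStd m) : g = 0 := by
  classical
  by_contra hne
  obtain ⟨m, hm, hmax⟩ := Finset.exists_max_image g.support mmWt
    (MvPolynomial.support_nonempty.mpr hne)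
  obtain ⟨S, hS, hcurve⟩ := mm_curve hq m (hstd m hm)
  let P : MvPolynomial (Fin p × Fin q) ℂ := ∑ m' ∈ g.support.filter
    (fun m' => mmWt m' = mmWt m ∧ ∀ s, m' s ≠ 0 → s ∈ S), MvPolynomial.monomial m' (g.coeff m')
  have hP : P ≠ 0 := by
    intro h
    have h' := congrArg (MvPolynomial.coeff m) h
    simp only [P, MvPolynomial.coeff_sum, MvPolynomial.coeff_monomial, MvPolynomial.coeff_zero]
      at h'
    rw [Finset.sum_ite_eq' , if_pos] at h'
    · exact MvPolynomial.mem_support_iff.mp hm h'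
    · exact Finset.mem_filter.mpr ⟨hm, rfl, hS⟩
  have hPX : P * ∏ s, MvPolynomial.X s ≠ 0 :=
    mul_ne_zero hP (Finset.prod_ne_zero_iff.mpr fun s _ => MvPolynomial.X_ne_zero s)
  obtain ⟨c, hc⟩ : ∃ c, MvPolynomial.eval c (P * ∏ s, MvPolynomial.X s) ≠ 0 := by
    by_contra hcon
    push Not at hcon
    exact hPX (MvPolynomial.funext fun c => by rw [hcon c, map_zero])
  rw [map_mul, map_prod] at hc
  simp only [MvPolynomial.eval_X] at hc
  have hc1 := left_ne_zero_of_mul hc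
  have hc2 : ∀ s, c s ≠ 0 := fun s =>
    Finset.prod_ne_zero_iff.mp (right_ne_zero_of_mul hc) s (Finset.mem_univ s)
  obtain ⟨u, lam, u1, u2, u3⟩ := hcurve c hc2
  let F : Polynomial ℂ := ∑ m' ∈ g.support, Polynomial.C (g.coeff m') *
    Polynomial.X ^ (mmWt m - mmWt m') * ∏ s, u s ^ m' s
  have hF0 : F.eval 0 = MvPolynomial.eval c P := by
    simp only [F, P, Polynomial.eval_finsetSum, map_sum, MvPolynomial.eval_monomial,
      Polynomial.eval_mul, Polynomial.eval_C, Polynomial.eval_pow, Polynomial.eval_X,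
      Polynomial.eval_prod]
    rw [Finset.sum_filter]
    refine Finset.sum_congr rfl fun m' hm' => ?_
    split_ifs with h
    · rw [h.1, Nat.sub_self, pow_zero, mul_one, Finsupp.prod_fintype _ _ (by simp)]
      congr 1
      refine Finset.prod_congr rfl fun s _ => ?_
      by_cases hs : m' s = 0
      · simp [hs]
      · rw [u1 s (h.2 s hs)]
    · by_cases hw : mmWt m' = mmWt m
      · have : ∃ s, m' s ≠ 0 ∧ s ∉ S := by
          by_contra hcon
          push Not at hcon
          exact h ⟨hw, hcon⟩
        obtain ⟨s, hs, hsS⟩ := this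
        rw [Finset.prod_eq_zero (Finset.mem_univ s), mul_zero]
        rw [u2 s hsS, zero_pow hs]
      · have := hmax m' hm'
        rw [zero_pow (by omega), mul_zero, zero_mul]
  have hFt : ∀ t : ℂ, t ≠ 0 → F.eval t = 0 := by
    intro t ht
    have hx := mmPhi_eval p q hq g hg
      (fun s => (t ^ (s.1.val * s.2.val))⁻¹ * (u s).eval t) (lam t) (u3 t ht).1 (u3 t ht).2
    have : F.eval t = t ^ mmWt m * MvPolynomial.eval
        (fun s => (t ^ (s.1.val * s.2.val))⁻¹ * (u s).eval t) g := by
      rw [MvPolynomial.eval_eq', Finset.mul_sum]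
      simp only [F, Polynomial.eval_finsetSum,
        Polynomial.eval_mul, Polynomial.eval_C, Polynomial.eval_pow, Polynomial.eval_X,
        Polynomial.eval_prod]
      refine Finset.sum_congr rfl fun m' hm' => ?_
      have hw : ∏ s, ((t ^ (s.1.val * s.2.val))⁻¹) ^ m' s = (t ^ mmWt m')⁻¹ := by
        rw [mmWt, ← Finset.prod_pow_eq_pow_sum, ← Finset.prod_inv_distrib]
        refine Finset.prod_congr rfl fun s _ => ?_
        rw [inv_pow, ← pow_mul, mul_comm]
      simp only [mul_pow, Finset.prod_mul_distrib]
      rw [hw, pow_sub₀ t ht (hmax m' hm')]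
      ring
    rw [this, hx, mul_zero]
  have hF : F = 0 := by
    apply Polynomial.eq_zero_of_infinite_isRoot
    refine Set.Infinite.mono (s := {0}ᶜ) (fun t ht => hFt t ht) ?_
    exact (Set.finite_singleton (0 : ℂ)).infinite_compl
  rw [hF, Polynomial.eval_zero] at hF0
  exact hc1 hF0.symm

/-- For `p ≥ q ≥ 1`, the ideal of maximal minors of the generic `p × q`
matrix is a prime ideal of `ℂ[x_{ij}]`. -/
theorem maximalMinorsIdeal_isPrime (p q : ℕ) (hq : 1 ≤ q) (hpq : q ≤ p) :
    (maximalMinorsIdeal p q).IsPrime := by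
  have hle : maximalMinorsIdeal p q ≤ RingHom.ker (mmPhi p q hq) := by
    refine Ideal.span_le.mpr ?_
    rintro _ ⟨σ, rfl⟩
    exact mmPhi_minor p q hq σ
  have heq : maximalMinorsIdeal p q = RingHom.ker (mmPhi p q hq) := by
    refine le_antisymm hle fun f hf => ?_
    obtain ⟨g, hfg, hstd⟩ := mm_span_all f
    have h1 : mmPhi p q hq (f - g) = 0 := hle hfg
    have h2 : mmPhi p q hq f = 0 := hf
    rw [map_sub, h2, zero_sub, neg_eq_zero] at h1
    rwa [mm_std_zero p q hq g h1 hstd, sub_zero] at hfg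
  rw [heq]
  exact RingHom.ker_isPrime _
end

section
/- Let $p \geq q \geq 1$ be natural numbers. In the polynomial ring $R = \mathbb{C}[x_{ij} : 1 \leq i \leq p, 1 \leq j \leq q]$, let $I \subset R$ be the ideal generated by all $q \times q$ minors of the generic $p \times q$ matrix $X = (x_{ij})$. Then the Krull dimension of the quotient ring $R/I$ equals $pq - (p - q + 1)$. -/
theorem ringKrullDim_eq_of_integral_injective (R S : Type*) [CommRing R] [CommRing S]
    [Algebra R S] [Algebra.IsIntegral R S] [FaithfulSMul R S] :
    ringKrullDim S = ringKrullDim R := by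
  apply le_antisymm
  · refine Order.krullDim_le_of_strictMono (PrimeSpectrum.comap (algebraMap R S)) ?_
    intro I J h
    exact Ideal.IsIntegral.comap_lt_comap (R := R) (I := I.asIdeal) (J := J.asIdeal) h
  · refine iSup_le fun l => ?_
    obtain ⟨⟨P, hP, hPo⟩⟩ := (inferInstance : Nonempty (Ideal.primesOver l.head.asIdeal S))
    obtain ⟨L, hL, -⟩ := Ideal.exists_ltSeries_of_hasGoingUp (S := S) l P
    rw [← hL]
    exact le_iSup (fun l : LTSeries (PrimeSpectrum S) => ((l.length : ℕ∞) : WithBot ℕ∞)) L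

/-- Noether normalization together with the dimension computation. -/
theorem exists_normalization (k A : Type) [Field k] [CommRing A] [Nontrivial A] [Algebra k A]
    [Algebra.FiniteType k A] : ∃ s : ℕ, ringKrullDim A = s ∧
      ∃ g : MvPolynomial (Fin s) k →ₐ[k] A, Function.Injective g ∧ g.IsIntegral := by
  obtain ⟨s, g, hg, hi⟩ := exists_integral_inj_algHom_of_fg k A
  refine ⟨s, ?_, g, hg, hi⟩
  let := g.toRingHom.toAlgebra
  have : Algebra.IsIntegral (MvPolynomial (Fin s) k) A := ⟨hi⟩
  have : FaithfulSMul (MvPolynomial (Fin s) k) A :=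
    (faithfulSMul_iff_algebraMap_injective _ _).2 hg
  rw [ringKrullDim_eq_of_integral_injective (MvPolynomial (Fin s) k) A]
  simp

theorem ringKrullDim_le_of_forall (k A : Type) [Field k] [CommRing A] [Nontrivial A] [Algebra k A]
    [Algebra.FiniteType k A] (d : ℕ)
    (h : ∀ (L : Type) [Field L] [Algebra k L] (f : A →ₐ[k] L),
      ∃ g : MvPolynomial (Fin d) k →ₐ[k] L, f.range ≤ g.range) :
    ringKrullDim A ≤ d := by
  obtain ⟨s, hs, g, hg, hi⟩ := exists_normalization k A
  rw [hs]
  obtain ⟨P, hP, hPo⟩ : ∃ P : Ideal A, P.IsPrime ∧ P.comap g.toRingHom = ⊥ := by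
    let := g.toRingHom.toAlgebra
    have : Algebra.IsIntegral (MvPolynomial (Fin s) k) A := ⟨hi⟩
    have : FaithfulSMul (MvPolynomial (Fin s) k) A :=
      (faithfulSMul_iff_algebraMap_injective _ _).2 hg
    obtain ⟨⟨P, hP, hPo⟩⟩ :=
      (inferInstance : Nonempty (Ideal.primesOver (⊥ : Ideal (MvPolynomial (Fin s) k)) A))
    exact ⟨P, hP, hPo.over.symm⟩
  let f : A →ₐ[k] FractionRing (A ⧸ P) :=
    (IsScalarTower.toAlgHom k (A ⧸ P) (FractionRing (A ⧸ P))).comp (Ideal.Quotient.mkₐ k P)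
  have hf : Function.Injective (f.comp g) := by
    rw [injective_iff_map_eq_zero]
    intro x hx
    have h1 : algebraMap (A ⧸ P) (FractionRing (A ⧸ P)) (Ideal.Quotient.mk P (g x)) = 0 := hx
    rw [FaithfulSMul.algebraMap_eq_zero_iff, Ideal.Quotient.eq_zero_iff_mem] at h1
    have h2 : x ∈ P.comap g.toRingHom := h1
    rwa [hPo] at h2
  obtain ⟨u, hu⟩ := h _ f
  have h1 := trdeg_le_of_injective (((f.comp g).codRestrict u.range
    (fun x => hu ⟨g x, rfl⟩))) (fun x y hxy => hf (congrArg Subtype.val hxy))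
  have h2 := trdeg_le_of_surjective u.rangeRestrict u.rangeRestrict_surjective
  have h3 := h1.trans h2
  rw [MvPolynomial.trdeg_of_isDomain, MvPolynomial.trdeg_of_isDomain] at h3
  simp at h3
  exact_mod_cast h3

theorem le_ringKrullDim_of_exists (k A : Type) [Field k] [CommRing A] [Algebra k A]
    [Algebra.FiniteType k A] (d : ℕ) (L : Type) [Field L] [Algebra k L] (f : A →ₐ[k] L)
    (T : Type) [Fintype T] (hT : Fintype.card T = d) (x : T → L)
    (hx : AlgebraicIndependent k x) (hxf : ∀ t, x t ∈ f.range) :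
    (d : WithBot ℕ∞) ≤ ringKrullDim A := by
  have : Algebra.FiniteType k f.range :=
    Algebra.FiniteType.of_surjective f.rangeRestrict f.rangeRestrict_surjective
  obtain ⟨s, hs, g, hg, hi⟩ := exists_normalization k f.range
  refine le_trans ?_ (ringKrullDim_le_of_surjective f.rangeRestrict.toRingHom
    f.rangeRestrict_surjective)
  rw [hs]
  have hy : AlgebraicIndependent k (fun t => (⟨x t, hxf t⟩ : f.range)) :=
    AlgebraicIndependent.of_comp f.range.val hx
  have h1 := hy.cardinalMk_le_trdeg
  have h2 : Algebra.trdeg k f.range = s := by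
    let := g.toRingHom.toAlgebra
    have : IsScalarTower k (MvPolynomial (Fin s) k) f.range :=
      IsScalarTower.of_algebraMap_eq fun r => (g.commutes r).symm
    have : Algebra.IsIntegral (MvPolynomial (Fin s) k) f.range := ⟨hi⟩
    have : FaithfulSMul (MvPolynomial (Fin s) k) f.range :=
      (faithfulSMul_iff_algebraMap_injective _ _).2 hg
    rw [← trdeg_add_eq k (MvPolynomial (Fin s) k), MvPolynomial.trdeg_of_isDomain,
      trdeg_eq_zero]
    simp
  rw [h2] at h1
  simp [hT] at h1
  exact_mod_cast h1

/-- If all maximal minors vanish, the columns are dependent. -/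
theorem exists_mulVec_eq_zero_of_minors {L : Type} [Field L] {p q : ℕ}
    (M : Matrix (Fin p) (Fin q) L)
    (h : ∀ σ : Fin q ↪ Fin p, (M.submatrix σ id).det = 0) :
    ∃ v : Fin q → L, v ≠ 0 ∧ M.mulVec v = 0 := by
  by_contra! hc
  have hinj : Function.Injective M.mulVecLin := by
    rw [injective_iff_map_eq_zero]
    intro v hv
    by_contra hne
    exact hc v hne hv
  have hr : M.rank = q := by
    rw [Matrix.rank, LinearMap.finrank_range_of_inj hinj]; simp
  rw [Matrix.rank_eq_finrank_span_row] at hr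
  obtain ⟨f, hf, -, hli⟩ := Submodule.exists_fun_fin_finrank_span_eq L (Set.range M.row)
  choose σ hσ using hf
  let τ : Fin q → Fin p := fun i => σ (Fin.cast hr.symm i)
  have hli' : LinearIndependent L (M.submatrix τ id).row := by
    have := hli.comp (Fin.cast hr.symm) (Fin.cast_injective _)
    have he : (M.submatrix τ id).row = f ∘ Fin.cast hr.symm := by
      funext i
      exact hσ (Fin.cast hr.symm i)
    rw [he]
    exact this
  have hτ : Function.Injective τ := by
    intro i j hij
    apply hli'.injective
    funext k
    simp [Matrix.row, hij]
  have h1 := Matrix.linearIndependent_rows_iff_isUnit.1 hli'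
  rw [Matrix.isUnit_iff_isUnit_det] at h1
  exact h1.ne_zero (h ⟨τ, hτ⟩)

theorem det_map_generic {L : Type} [Field L] [Algebra ℂ L] {p q : ℕ}
    (f : MvPolynomial (Fin p × Fin q) ℂ →ₐ[ℂ] L) (σ : Fin q → Fin p) :
    f ((genericMatrix p q).submatrix σ id).det =
      ((Matrix.of fun i j => f (MvPolynomial.X (i, j))).submatrix σ id).det := by
  rw [AlgHom.map_det]
  rfl

/-- Upper bound: a specialization of the generic matrix with dependent columns. -/
theorem upper_param {L : Type} [Field L] [Algebra ℂ L] {p m : ℕ}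
    (M : Matrix (Fin p) (Fin (m + 1)) L)
    (h : ∀ σ : Fin (m + 1) ↪ Fin p, (M.submatrix σ id).det = 0) :
    ∃ g : MvPolynomial (Fin p × Fin m ⊕ Fin m) ℂ →ₐ[ℂ] L, ∀ i j, M i j ∈ g.range := by
  obtain ⟨v, hv, hMv⟩ := exists_mulVec_eq_zero_of_minors M h
  obtain ⟨j₀, hj₀⟩ := Function.ne_iff.1 hv
  simp only [Pi.zero_apply] at hj₀
  let g : MvPolynomial (Fin p × Fin m ⊕ Fin m) ℂ →ₐ[ℂ] L :=
    MvPolynomial.aeval (Sum.elim (fun t => M t.1 (j₀.succAbove t.2))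
      (fun k => - v (j₀.succAbove k) / v j₀))
  have hg1 : ∀ i k, M i (j₀.succAbove k) ∈ g.range := fun i k =>
    ⟨MvPolynomial.X (Sum.inl (i, k)), by simp [g]⟩
  have hg2 : ∀ k, - v (j₀.succAbove k) / v j₀ ∈ g.range := fun k =>
    ⟨MvPolynomial.X (Sum.inr k), by simp [g]⟩
  refine ⟨g, fun i j => ?_⟩
  rcases Fin.eq_self_or_eq_succAbove j₀ j with rfl | ⟨k, rfl⟩
  · have h1 := congrFun hMv i
    rw [Matrix.mulVec, dotProduct, Fin.sum_univ_succAbove _ j] at h1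
    have h2 : M i j = ∑ k, M i (j.succAbove k) * (- v (j.succAbove k) / v j) := by
      simp only [mul_div_assoc', mul_neg, ← Finset.sum_div, Finset.sum_neg_distrib]
      rw [eq_div_iff hj₀]
      exact eq_neg_of_add_eq_zero_left h1
    rw [h2]
    exact Subalgebra.sum_mem _ fun k _ => Subalgebra.mul_mem _ (hg1 i k) (hg2 k)
  · exact hg1 i k

theorem upper_bound (p m : ℕ)
    [Nontrivial (MvPolynomial (Fin p × Fin (m + 1)) ℂ ⧸ maximalMinorsIdeal p (m + 1))] :
    ringKrullDim (MvPolynomial (Fin p × Fin (m + 1)) ℂ ⧸ maximalMinorsIdeal p (m + 1)) ≤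
      ((p * m + m : ℕ) : WithBot ℕ∞) := by
  apply ringKrullDim_le_of_forall ℂ
  intro L _ _ f
  let F := f.comp (Ideal.Quotient.mkₐ ℂ (maximalMinorsIdeal p (m + 1)))
  obtain ⟨g, hg⟩ := upper_param (Matrix.of fun i j => F (MvPolynomial.X (i, j))) (by
    intro σ
    rw [← det_map_generic]
    have : Ideal.Quotient.mk (maximalMinorsIdeal p (m + 1))
        ((genericMatrix p (m + 1)).submatrix σ id).det = 0 :=
      Ideal.Quotient.eq_zero_iff_mem.2 (Ideal.subset_span ⟨σ, rfl⟩)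
    change f (Ideal.Quotient.mk _ _) = 0
    rw [this, map_zero])
  let e : Fin (p * m + m) ≃ (Fin p × Fin m ⊕ Fin m) :=
    (finSumFinEquiv.symm).trans (Equiv.sumCongr finProdFinEquiv.symm (Equiv.refl _))
  refine ⟨g.comp (MvPolynomial.renameEquiv ℂ e).toAlgHom, ?_⟩
  have h1 : F.range ≤ g.range := by
    rw [← Algebra.map_top, ← MvPolynomial.adjoin_range_X, AlgHom.map_adjoin, Algebra.adjoin_le_iff]
    rintro _ ⟨_, ⟨⟨i, j⟩, rfl⟩, rfl⟩
    exact hg i j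
  rintro _ ⟨a, rfl⟩
  obtain ⟨b, rfl⟩ := Ideal.Quotient.mk_surjective a
  obtain ⟨c, hc⟩ := h1 ⟨b, rfl⟩
  refine ⟨(MvPolynomial.renameEquiv ℂ e).symm c, ?_⟩
  change g (MvPolynomial.renameEquiv ℂ e ((MvPolynomial.renameEquiv ℂ e).symm c)) = _
  rw [AlgEquiv.apply_symm_apply]
  exact hc

theorem det_block_ne_zero (p m : ℕ) (hp : m ≤ p) :
    (Matrix.of fun i j : Fin m => (MvPolynomial.X (Sum.inl (Fin.castLE hp i, j)) :
      MvPolynomial (Fin p × Fin m ⊕ Fin m) ℂ)).det ≠ 0 := by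
  intro h
  have h1 := congrArg (MvPolynomial.rename (R := ℂ)
    (fun t : Fin m × Fin m => (Sum.inl (Fin.castLE hp t.1, t.2) : Fin p × Fin m ⊕ Fin m)))
    (rfl : (Matrix.mvPolynomialX (Fin m) (Fin m) ℂ).det = _)
  refine Matrix.det_mvPolynomialX_ne_zero (Fin m) ℂ (MvPolynomial.rename_injective
    (fun t : Fin m × Fin m => (Sum.inl (Fin.castLE hp t.1, t.2) : Fin p × Fin m ⊕ Fin m)) ?_ ?_)
  · rintro ⟨a, b⟩ ⟨c, d⟩ h
    simpa using h
  · rw [map_zero, AlgHom.map_det, ← h]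
    congr 1
    ext1 i j
    simp

theorem lower_aux (p m : ℕ) (hmp : m ≤ p) (L : Type) [Field L] [Algebra ℂ L]
    (x : Fin p × Fin m ⊕ Fin m → L) (hx : AlgebraicIndependent ℂ x)
    (C : Matrix (Fin m) (Fin m) L)
    (hCx : C = Matrix.of fun i j => x (Sum.inl (Fin.castLE hmp i, j))) (hC : IsUnit C.det) :
    ((p * m + m : ℕ) : WithBot ℕ∞) ≤
    ringKrullDim (MvPolynomial (Fin p × Fin (m + 1)) ℂ ⧸ maximalMinorsIdeal p (m + 1)) := by
  let b : Fin m → L := fun i => x (Sum.inr i)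
  let a : Fin m → L := C⁻¹.mulVec b
  have ha : C.mulVec a = b := by
    simp only [a, Matrix.mulVec_mulVec, Matrix.mul_nonsing_inv _ hC, Matrix.one_mulVec]
  let N : Fin p → Fin (m + 1) → L := fun i => Fin.snoc (α := fun _ => L)
    (fun j => x (Sum.inl (i, j))) (∑ k, x (Sum.inl (i, k)) * a k)
  let F : MvPolynomial (Fin p × Fin (m + 1)) ℂ →ₐ[ℂ] L := MvPolynomial.aeval fun t => N t.1 t.2
  have hF : ∀ i j, F (MvPolynomial.X (i, j)) = N i j := fun i j => by simp [F]
  have hI : ∀ y ∈ maximalMinorsIdeal p (m + 1), F y = 0 := by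
    suffices maximalMinorsIdeal p (m + 1) ≤ RingHom.ker F from fun y hy => this hy
    rw [maximalMinorsIdeal, Ideal.span_le]
    rintro _ ⟨σ, rfl⟩
    change F _ = 0
    rw [det_map_generic]
    apply Matrix.exists_mulVec_eq_zero_iff.1
    refine ⟨Fin.snoc (α := fun _ => L) a (-1), ?_, ?_⟩
    · intro h
      have := congrFun h (Fin.last m)
      simp at this
    · funext i
      simp [Matrix.mulVec, dotProduct, Fin.sum_univ_castSucc, hF, N]
  let f := Ideal.Quotient.liftₐ (maximalMinorsIdeal p (m + 1)) F hI
  have hf : ∀ i j, N i j ∈ f.range := fun i j =>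
    ⟨Ideal.Quotient.mk _ (MvPolynomial.X (i, j)), (hF i j)⟩
  refine le_ringKrullDim_of_exists ℂ _ _ L f _ (by simp) x hx ?_
  rintro (⟨i, j⟩ | i)
  · have := hf i j.castSucc
    simpa [N] using this
  · have h1 := hf (Fin.castLE hmp i) (Fin.last m)
    have h2 : N (Fin.castLE hmp i) (Fin.last m) = x (Sum.inr i) := by
      have := congrFun ha i
      rw [hCx] at this
      simp only [N, Fin.snoc_last]
      exact this
    rwa [h2] at h1

theorem lower_bound (p m : ℕ) (hp : m + 1 ≤ p) :
    ((p * m + m : ℕ) : WithBot ℕ∞) ≤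
    ringKrullDim (MvPolynomial (Fin p × Fin (m + 1)) ℂ ⧸ maximalMinorsIdeal p (m + 1)) := by
  let T := Fin p × Fin m ⊕ Fin m
  let L := FractionRing (MvPolynomial T ℂ)
  let x : T → L := fun t => algebraMap (MvPolynomial T ℂ) L (MvPolynomial.X t)
  have hx : AlgebraicIndependent ℂ x := by
    have := (MvPolynomial.algebraicIndependent_X T ℂ).map'
      (f := IsScalarTower.toAlgHom ℂ (MvPolynomial T ℂ) L) (IsFractionRing.injective _ _)
    exact this
  have hmp : m ≤ p := by omega
  let C : Matrix (Fin m) (Fin m) L := Matrix.of fun i j => x (Sum.inl (Fin.castLE hmp i, j))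
  have hC : IsUnit C.det := by
    rw [isUnit_iff_ne_zero]
    intro h
    apply det_block_ne_zero p m hmp
    apply IsFractionRing.injective (MvPolynomial T ℂ) L
    rw [map_zero, RingHom.map_det, ← h]
    rfl
  exact lower_aux p m hmp L x hx C rfl hC

/-- For `p ≥ q ≥ 1`, the Krull dimension of the quotient of `ℂ[x_{ij}]`
by the ideal of maximal minors of the generic `p × q` matrix is `pq - (p - q + 1)`. -/
theorem maximalMinorsIdeal_krullDim (p q : ℕ) (hq : 1 ≤ q) (hpq : q ≤ p) :
    ringKrullDim (MvPolynomial (Fin p × Fin q) ℂ ⧸ maximalMinorsIdeal p q) =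
      ((p * q - (p - q + 1) : ℕ) : WithBot (WithTop ℕ)) := by
  obtain ⟨m, rfl⟩ : ∃ m, q = m + 1 := ⟨q - 1, by omega⟩
  have hd : p * (m + 1) - (p - (m + 1) + 1) = p * m + m := by
    rw [Nat.mul_succ]; omega
  rw [hd]
  have hl := lower_bound p m hpq
  have hN : Nontrivial (MvPolynomial (Fin p × Fin (m + 1)) ℂ ⧸ maximalMinorsIdeal p (m + 1)) := by
    by_contra hc
    rw [not_nontrivial_iff_subsingleton] at hc
    rw [ringKrullDim_eq_bot_of_subsingleton] at hl
    exact WithBot.coe_ne_bot (le_bot_iff.1 hl)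
  exact le_antisymm (upper_bound p m) hl
end

section
/- Let $p \geq q \geq 1$ be natural numbers. In the polynomial ring $R = \mathbb{C}[x_{ij} : 1 \leq i \leq p, 1 \leq j \leq q]$, let $I \subset R$ be the ideal generated by all $q \times q$ minors of the generic $p \times q$ matrix $X = (x_{ij})$, and let $\mathfrak{m} = (x_{ij})$ be the maximal ideal of polynomials vanishing at the origin. Then the localization of $R/I$ at the maximal ideal $\mathfrak{m}/I$ is a Cohen–Macaulay local ring. -/
/-- A commutative ring is a Cohen–Macaulay local ring if it is a Noetherian local ring
possessing a regular sequence of non-units (i.e. of elements of the maximal ideal)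
whose length equals the Krull dimension of the ring. -/
def IsCohenMacaulayLocalRing (A : Type*) [CommRing A] : Prop :=
  IsLocalRing A ∧ IsNoetherianRing A ∧
    ∃ rs : List A, (∀ r ∈ rs, r ∈ nonunits A) ∧
      RingTheory.Sequence.IsRegular A rs ∧
      ((rs.length : ℕ) : WithBot (WithTop ℕ)) = ringKrullDim A

/-- The image in `R/I` of the maximal ideal `(x_{ij})` of polynomials vanishing
at the origin, where `I` is the ideal of maximal minors of the generic matrix. -/
noncomputable def originIdealMod (p q : ℕ) :
    Ideal (MvPolynomial (Fin p × Fin q) ℂ ⧸ maximalMinorsIdeal p q) :=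
  (Ideal.span (Set.range (MvPolynomial.X : Fin p × Fin q → MvPolynomial (Fin p × Fin q) ℂ))).map
    (Ideal.Quotient.mk (maximalMinorsIdeal p q))


open CategoryTheory Abelian in
/-- Depth at least `n`, phrased through vanishing of `Ext`. -/
def DepthGE {B : Type} [CommRing B] [IsLocalRing B] (n : ℕ) (M : Type) [AddCommGroup M]
    [Module B M] : Prop :=
  ∀ i < n, Subsingleton (Ext (ModuleCat.of B (B ⧸ IsLocalRing.maximalIdeal B))
    (ModuleCat.of B M) i)

section Depth

open CategoryTheory Abelian RingTheory.Sequence Pointwise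

variable {B : Type} [CommRing B] [IsLocalRing B]
variable {M N P : Type} [AddCommGroup M] [Module B M] [AddCommGroup N] [Module B N]
  [AddCommGroup P] [Module B P]

lemma DepthGE.of_subsingleton [Subsingleton M] (n : ℕ) : DepthGE (B := B) n M := by
  intro i _
  have hz : Limits.IsZero (ModuleCat.of B M) := ModuleCat.isZero_of_subsingleton _
  refine ⟨fun a b => ?_⟩
  rw [← Ext.comp_mk₀_id a, ← Ext.comp_mk₀_id b, hz.eq_of_src (𝟙 _) 0, Ext.mk₀_zero, Ext.comp_zero,
    Ext.comp_zero]

lemma depth_shortExact (f : M →ₗ[B] N) (g : N →ₗ[B] P) (hf : Function.Injective f)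
    (hg : Function.Surjective g) (hfg : Function.Exact f g) :
    (ModuleCat.shortComplexOfCompEqZero f g hfg.linearMap_comp_eq_zero).ShortExact :=
  ModuleCat.shortComplex_shortExact _ hfg hf hg

lemma DepthGE.left (n : ℕ) (f : M →ₗ[B] N) (g : N →ₗ[B] P) (hf : Function.Injective f)
    (hg : Function.Surjective g) (hfg : Function.Exact f g)
    (hN : DepthGE (B := B) (n + 1) N) (hP : DepthGE (B := B) n P) :
    DepthGE (B := B) (n + 1) M := by
  intro i hi
  have hS := depth_shortExact f g hf hg hfg
  have hN' := hN i hi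
  refine subsingleton_of_forall_eq 0 fun x => ?_
  rcases i with _ | i
  · obtain ⟨φ, rfl⟩ := Ext.addEquiv₀.symm.surjective x
    have := hS.mono_f
    apply Ext.postcomp_mk₀_injective_of_mono _ (ModuleCat.ofHom f)
    exact hN'.elim _ _
  · obtain ⟨y, hy⟩ := Ext.covariant_sequence_exact₁ _ hS x (hN'.elim _ _) rfl
    rw [← hy, (hP i (by omega)).elim y 0, Ext.zero_comp]

lemma DepthGE.right (n : ℕ) (f : M →ₗ[B] N) (g : N →ₗ[B] P) (hf : Function.Injective f)
    (hg : Function.Surjective g) (hfg : Function.Exact f g)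
    (hM : DepthGE (B := B) (n + 1) M) (hN : DepthGE (B := B) n N) :
    DepthGE (B := B) n P := by
  intro i hi
  have hS := depth_shortExact f g hf hg hfg
  refine subsingleton_of_forall_eq 0 fun x => ?_
  obtain ⟨y, hy⟩ := Ext.covariant_sequence_exact₃ _ hS x rfl ((hM (i + 1) (by omega)).elim _ _)
  rw [← hy, (hN i hi).elim y 0, Ext.zero_comp]

lemma DepthGE.congr {n : ℕ} (e : M ≃ₗ[B] N) (h : DepthGE (B := B) n N) :
    DepthGE (B := B) n M := by
  rcases n with _ | n
  · intro i hi; omega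
  · refine DepthGE.left n e.toLinearMap (0 : N →ₗ[B] PUnit) e.injective
      (fun x => ⟨0, Subsingleton.elim _ _⟩) (fun x => ?_) h (DepthGE.of_subsingleton _)
    simp

lemma DepthGE.mono {m n : ℕ} (hmn : m ≤ n) (h : DepthGE (B := B) n M) :
    DepthGE (B := B) m M := fun i hi => h i (by omega)

lemma maximal_smul_lt [Module.Finite B M] [Nontrivial M] :
    IsLocalRing.maximalIdeal B • (⊤ : Submodule B M) < ⊤ := by
  refine lt_top_iff_ne_top.mpr fun h => ?_
  have := Submodule.eq_bot_of_le_smul_of_le_jacobson_bot (IsLocalRing.maximalIdeal B)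
    (⊤ : Submodule B M) Module.Finite.fg_top h.ge (IsLocalRing.maximalIdeal_le_jacobson _)
  exact top_ne_bot this

lemma DepthGE.exists_regular [IsNoetherianRing B] [Module.Finite B M] [Nontrivial M] {n : ℕ}
    (h : DepthGE (B := B) n M) :
    ∃ rs : List B, rs.length = n ∧ (∀ r ∈ rs, r ∈ IsLocalRing.maximalIdeal B) ∧
      IsRegular M rs := by
  refine ModuleCat.exists_isRegular_of_exists_subsingleton_ext (IsLocalRing.maximalIdeal B) n
    (ModuleCat.of B M) maximal_smul_lt (ModuleCat.of B (B ⧸ IsLocalRing.maximalIdeal B)) ?_ h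
  simp [Module.support_eq_zeroLocus, Ideal.annihilator_quotient]

lemma DepthGE.of_regular [IsNoetherianRing B] [Module.Finite B M] [Nontrivial M]
    (rs : List B) (hrs : ∀ r ∈ rs, r ∈ IsLocalRing.maximalIdeal B) (h : IsRegular M rs) :
    DepthGE (B := B) rs.length M := by
  refine ModuleCat.subsingleton_ext_of_exists_isRegular (IsLocalRing.maximalIdeal B)
    (ModuleCat.of B (B ⧸ IsLocalRing.maximalIdeal B)) ?_ (ModuleCat.of B M) maximal_smul_lt rs hrs h
  simp [Module.support_eq_zeroLocus, Ideal.annihilator_quotient]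

/-- If a nonzero element of `M` is killed by `J`, a regular sequence on `M` has length at most
`dim B / J`. -/
lemma length_le_of_killed [IsNoetherianRing B] (rs : List B)
    (hrs : ∀ r ∈ rs, r ∈ IsLocalRing.maximalIdeal B) {M : Type} [AddCommGroup M] [Module B M]
    [Module.Finite B M]
    (h : IsWeaklyRegular M rs) (J : Ideal B) (m : M) (hm : m ≠ 0) (hJ : ∀ b ∈ J, b • m = 0) :
    (rs.length : WithBot ℕ∞) ≤ ringKrullDim (B ⧸ J) := by
  induction rs generalizing M J with
  | nil =>
    have : Nontrivial (B ⧸ J) := by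
      refine Ideal.Quotient.nontrivial_iff.mpr fun h => hm ?_
      simpa using hJ 1 (h ▸ Submodule.mem_top)
    simpa using ringKrullDim_nonneg_of_nontrivial
  | cons r rs ih =>
    rw [isWeaklyRegular_cons_iff] at h
    obtain ⟨hr, h⟩ := h
    have hrm : r ∈ IsLocalRing.maximalIdeal B := hrs r (by simp)
    let N : Submodule B M := Submodule.torsionBySet B M J
    have hmN : m ∈ N := by
      rw [Submodule.mem_torsionBySet_iff]; rintro ⟨b, hb⟩; exact hJ b hb
    have hsat : ∀ x : M, r • x ∈ N → x ∈ N := by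
      intro x hx
      rw [Submodule.mem_torsionBySet_iff] at hx ⊢
      rintro ⟨b, hb⟩
      have := hx ⟨b, hb⟩
      apply hr
      simpa [smul_comm r b x] using this
    let J1 : Ideal B := Module.annihilator B N
    have hJ1 : J ≤ J1 := by
      intro b hb
      refine Module.mem_annihilator.mpr fun x => Subtype.ext ?_
      exact (Submodule.mem_torsionBySet_iff _ _).mp x.2 ⟨b, hb⟩
    obtain ⟨x, hxN, hx⟩ : ∃ x ∈ N, x ∉ r • N := by
      by_contra! hcon
      have hle : N ≤ Ideal.span {r} • N := by
        rw [Submodule.ideal_span_singleton_smul]; exact hcon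
      have := Submodule.eq_bot_of_le_smul_of_le_jacobson_bot (Ideal.span {r}) N
        (IsNoetherian.noetherian N) hle
        ((Ideal.span_singleton_le_iff_mem _ |>.mpr hrm).trans
          (IsLocalRing.maximalIdeal_le_jacobson _))
      rw [this] at hmN
      exact hm (by simpa using hmN)
    have key := ih (fun s hs => hrs s (by simp [hs])) h (J1 ⊔ Ideal.span {r})
      (Submodule.Quotient.mk x : QuotSMulTop r M) ?_ ?_
    · have hreg : Ideal.Quotient.mk J1 r ∈ nonZeroDivisors (B ⧸ J1) := by
        rw [mem_nonZeroDivisors_iff_right]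
        intro c hc
        obtain ⟨c, rfl⟩ := Ideal.Quotient.mk_surjective c
        rw [← map_mul, Ideal.Quotient.eq_zero_iff_mem] at hc
        rw [Ideal.Quotient.eq_zero_iff_mem]
        refine Module.mem_annihilator.mpr fun y => ?_
        have h1 := Module.mem_annihilator.mp hc y
        apply Subtype.ext
        apply hr
        have h2 := congrArg Subtype.val h1
        simpa [mul_comm c r, mul_smul] using h2
      have h1 := ringKrullDim_quotient_succ_le_of_nonZeroDivisor hreg
      have e : ((B ⧸ J1) ⧸ Ideal.span {Ideal.Quotient.mk J1 r}) ≃+* B ⧸ (J1 ⊔ Ideal.span {r}) :=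
        (Ideal.quotEquivOfEq (by rw [Ideal.map_span, Set.image_singleton])).trans
          (DoubleQuot.quotQuotEquivQuotSup J1 (Ideal.span {r}))
      rw [ringKrullDim_eq_of_ringEquiv e] at h1
      have h2 : ringKrullDim (B ⧸ J1) ≤ ringKrullDim (B ⧸ J) :=
        ringKrullDim_le_of_surjective (Ideal.Quotient.factor hJ1)
          (Ideal.Quotient.factor_surjective hJ1)
      refine le_trans ?_ (h1.trans h2)
      push_cast [List.length_cons]
      gcongr
    · intro h0
      rw [Submodule.Quotient.mk_eq_zero] at h0
      obtain ⟨y, -, hy⟩ := h0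
      apply hx
      refine ⟨y, hsat y ?_, hy⟩
      have : r • y = x := hy
      rwa [this]
    · intro b hb
      obtain ⟨c, hc, d, hd, rfl⟩ := Submodule.mem_sup.mp hb
      obtain ⟨d, rfl⟩ := Ideal.mem_span_singleton'.mp hd
      rw [← Submodule.Quotient.mk_smul, Submodule.Quotient.mk_eq_zero, add_smul]
      have h1 : c • x = 0 := congrArg Subtype.val (Module.mem_annihilator.mp hc ⟨x, hxN⟩)
      rw [h1, zero_add, mul_comm, mul_smul]
      exact Submodule.smul_mem_pointwise_smul _ _ _ Submodule.mem_top

end Depth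


section Step

open RingTheory.Sequence

variable {B : Type} [CommRing B] [IsLocalRing B]

lemma range_lc {B : Type} [CommRing B] {ι : Type} (K : Ideal B) (Δ : ι → B) :
    LinearMap.range (Finsupp.linearCombination B (fun T => (Submodule.Quotient.mk (Δ T) : B ⧸ K)))
      = Submodule.map K.mkQ (Ideal.span (Set.range Δ)) := by
  rw [Finsupp.range_linearCombination, Ideal.span, Submodule.map_span, ← Set.range_comp]
  rfl

lemma lc_eq {B : Type} [CommRing B] {ι : Type} (K : Ideal B) (Δ : ι → B) (c : ι →₀ B) :
    Finsupp.linearCombination B (fun T => (Submodule.Quotient.mk (Δ T) : B ⧸ K)) c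
      = Submodule.Quotient.mk (c.sum fun T a => a * Δ T) := by
  rw [Finsupp.linearCombination_apply, Finsupp.sum, Finsupp.sum]
  exact (map_sum K.mkQ _ _).symm

lemma ker_lc_le {B : Type} [CommRing B] {ι : Type} (K : Ideal B) (Δ f : ι → B)
    (hsym : ∀ T U, f T * Δ U - f U * Δ T ∈ K)
    (hΔ : ∀ b, (∀ U, b * Δ U ∈ K) → b ∈ K) :
    LinearMap.ker (Finsupp.linearCombination B (fun T => (Submodule.Quotient.mk (Δ T) : B ⧸ K))) ≤
    LinearMap.ker (Finsupp.linearCombination B (fun T => (Submodule.Quotient.mk (f T) : B ⧸ K))) := by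
  intro c hc
  rw [LinearMap.mem_ker, lc_eq, Submodule.Quotient.mk_eq_zero] at hc ⊢
  refine hΔ _ fun U => ?_
  have h1 : (c.sum fun T a => a * f T) * Δ U - f U * (c.sum fun T a => a * Δ T) ∈ K := by
    simp only [Finsupp.sum, Finset.sum_mul, Finset.mul_sum, ← Finset.sum_sub_distrib]
    refine Ideal.sum_mem _ fun T _ => ?_
    have := K.mul_mem_left (c T) (hsym T U)
    convert this using 1
    ring
  have := K.add_mem h1 (K.mul_mem_left (f U) hc)
  simpa using this

lemma exact_factor {B : Type} [CommRing B] (K L : Ideal B) (h : K ≤ L) :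
    Function.Exact (Submodule.map K.mkQ L : Submodule B (B ⧸ K)).subtype
      (Submodule.factor h) := by
  intro x
  obtain ⟨x, rfl⟩ := Submodule.Quotient.mk_surjective _ x
  constructor
  · intro hx
    have hx' : x ∈ L := by
      have : (Submodule.Quotient.mk x : B ⧸ L) = 0 := hx
      rwa [Submodule.Quotient.mk_eq_zero] at this
    exact ⟨⟨_, x, hx', rfl⟩, rfl⟩
  · rintro ⟨⟨_, y, hy, rfl⟩, h2⟩
    rw [← h2]
    exact (Submodule.Quotient.mk_eq_zero L).mpr hy

lemma nonzero_killed [IsNoetherianRing B] {n : ℕ} {M : Type} [AddCommGroup M] [Module B M]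
    [Module.Finite B M] (h : DepthGE (B := B) (n + 1) M) (J : Ideal B)
    (hdim : ringKrullDim (B ⧸ J) ≤ n) (m : M) (hJ : ∀ b ∈ J, b • m = 0) : m = 0 := by
  by_contra hm
  have : Nontrivial M := ⟨m, 0, hm⟩
  obtain ⟨rs, hl, hrs, hreg⟩ := h.exists_regular
  have h1 := length_le_of_killed rs hrs hreg.toIsWeaklyRegular J m hm hJ
  rw [hl] at h1
  have h2 := h1.trans hdim
  norm_cast at h2
  omega

lemma depth_step [IsNoetherianRing B] {ι : Type} (K : Ideal B) (Δ f : ι → B) (n : ℕ)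
    (hK : K ≤ Ideal.span (Set.range Δ))
    (hsym : ∀ T U, f T * Δ U - f U * Δ T ∈ K)
    (hd1 : DepthGE (B := B) (n + 1) (B ⧸ K))
    (hd2 : DepthGE (B := B) n (B ⧸ Ideal.span (Set.range Δ)))
    (hD : ringKrullDim (B ⧸ Ideal.span (Set.range Δ)) ≤ n)
    (hF : ringKrullDim (B ⧸ (K ⊔ Ideal.span (Set.range f))) ≤ n) :
    DepthGE (B := B) n (B ⧸ (K ⊔ Ideal.span (Set.range f))) := by
  have annΔ : ∀ b, (∀ U, b * Δ U ∈ K) → b ∈ K := by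
    intro b hb
    rw [← Submodule.Quotient.mk_eq_zero K]
    refine nonzero_killed hd1 _ hD _ fun c hc => ?_
    rw [← Submodule.Quotient.mk_smul, Submodule.Quotient.mk_eq_zero, smul_eq_mul]
    have : Ideal.span (Set.range Δ) ≤ Submodule.comap (LinearMap.mulRight B b) K := by
      rw [Ideal.span_le]
      rintro _ ⟨U, rfl⟩
      simpa [mul_comm] using hb U
    exact this hc
  have annf : ∀ b, (∀ U, b * f U ∈ K) → b ∈ K := by
    intro b hb
    rw [← Submodule.Quotient.mk_eq_zero K]
    refine nonzero_killed hd1 _ hF _ fun c hc => ?_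
    rw [← Submodule.Quotient.mk_smul, Submodule.Quotient.mk_eq_zero, smul_eq_mul]
    have : K ⊔ Ideal.span (Set.range f) ≤ Submodule.comap (LinearMap.mulRight B b) K := by
      refine sup_le (fun x hx => ?_) ?_
      · simpa using K.mul_mem_right b hx
      rw [Ideal.span_le]
      rintro _ ⟨U, rfl⟩
      simpa [mul_comm] using hb U
    exact this hc
  have hker := le_antisymm (ker_lc_le K Δ f hsym annΔ)
    (ker_lc_le K f Δ (fun T U => by
      have := hsym U T
      convert this using 1; ring) annf)
  let φ := Finsupp.linearCombination B (fun T => (Submodule.Quotient.mk (Δ T) : B ⧸ K))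
  let ψ := Finsupp.linearCombination B (fun T => (Submodule.Quotient.mk (f T) : B ⧸ K))
  have hmapf : Submodule.map K.mkQ (Ideal.span (Set.range f)) =
      Submodule.map K.mkQ (K ⊔ Ideal.span (Set.range f)) := by
    rw [Submodule.map_sup, Submodule.mkQ_map_self, bot_sup_eq]
  let e : (Submodule.map K.mkQ (K ⊔ Ideal.span (Set.range f)) : Submodule B (B ⧸ K)) ≃ₗ[B]
      (Submodule.map K.mkQ (Ideal.span (Set.range Δ)) : Submodule B (B ⧸ K)) :=
    (LinearEquiv.ofEq _ _ ((range_lc K f).trans hmapf).symm).trans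
    (ψ.quotKerEquivRange.symm.trans ((Submodule.quotEquivOfEq _ _ hker.symm).trans
      (φ.quotKerEquivRange.trans (LinearEquiv.ofEq _ _ (range_lc K Δ)))))
  have hJ' := DepthGE.left n _ _ (Submodule.subtype_injective _) (Submodule.factor_surjective hK)
    (exact_factor K _ hK) hd1 hd2
  have hJ := hJ'.congr e
  exact DepthGE.right n _ _ (Submodule.subtype_injective _)
    (Submodule.factor_surjective (le_sup_left))
    (exact_factor K _ le_sup_left) hJ (hd1.mono (by omega))

end Step


section Minors

variable {B : Type} [CommRing B]

/-- The submatrix with rows `σ` and the first `b` columns. -/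
def rowMat (x : ℕ → ℕ → B) (b : ℕ) (σ : Fin b → ℕ) : Matrix (Fin b) (Fin b) B :=
  Matrix.of fun i j => x (σ i) j

/-- Ideal of `b`-minors of the first `a` rows and `b` columns. -/
def minorIdeal (x : ℕ → ℕ → B) (a b : ℕ) : Ideal B :=
  Ideal.span (Set.range fun σ : Fin b → Fin a => (rowMat x b (fun i => (σ i : ℕ))).det)

lemma minor_mem (x : ℕ → ℕ → B) {a b : ℕ} (σ : Fin b → ℕ) (h : ∀ i, σ i < a) :
    (rowMat x b σ).det ∈ minorIdeal x a b :=
  Ideal.subset_span ⟨fun i => ⟨σ i, h i⟩, rfl⟩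

lemma minorIdeal_zero (x : ℕ → ℕ → B) (a : ℕ) : minorIdeal x a 0 = ⊤ := by
  rw [Ideal.eq_top_iff_one]
  have := minor_mem x (a := a) (b := 0) Fin.elim0 (fun i => i.elim0)
  simpa using this

lemma rowMat_det_eq_zero (x : ℕ → ℕ → B) {b : ℕ} (σ : Fin b → ℕ) {i j : Fin b} (hij : i ≠ j)
    (h : σ i = σ j) : (rowMat x b σ).det = 0 :=
  Matrix.det_zero_of_row_eq hij (by ext k; simp [rowMat, h])

lemma minorIdeal_self_succ (x : ℕ → ℕ → B) (b : ℕ) : minorIdeal x b (b + 1) = ⊥ := by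
  rw [minorIdeal, Ideal.span_eq_bot]
  rintro _ ⟨σ, rfl⟩
  obtain ⟨i, j, hij, h⟩ := Fintype.exists_ne_map_eq_of_card_lt σ (by simp)
  exact rowMat_det_eq_zero x _ hij (by rw [h])

lemma minorIdeal_succ_le (x : ℕ → ℕ → B) (a b : ℕ) :
    minorIdeal x a (b + 1) ≤ minorIdeal x a b := by
  rw [minorIdeal, Ideal.span_le]
  rintro _ ⟨σ, rfl⟩
  simp only [SetLike.mem_coe]
  rw [Matrix.det_succ_column _ (Fin.last b)]
  refine Ideal.sum_mem _ fun i _ => Ideal.mul_mem_left _ _ ?_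
  convert minor_mem x (a := a) (fun k => (σ (i.succAbove k) : ℕ)) (fun k => (σ _).2) using 2
  ext k l
  simp [rowMat]

/-- The minor using the rows `T` and the row `a`. -/
def lastMinor (x : ℕ → ℕ → B) (a b : ℕ) (T : Fin b → Fin a) : B :=
  (rowMat x (b + 1) (Fin.snoc (fun i => (T i : ℕ)) a : Fin (b + 1) → ℕ)).det

lemma minorIdeal_succ_succ (x : ℕ → ℕ → B) (a b : ℕ) :
    minorIdeal x (a + 1) (b + 1) =
      minorIdeal x a (b + 1) ⊔ Ideal.span (Set.range (lastMinor x a b)) := by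
  apply le_antisymm
  · rw [minorIdeal, Ideal.span_le]
    rintro _ ⟨σ, rfl⟩
    simp only [SetLike.mem_coe]
    by_cases hσ : ∃ i, (σ i : ℕ) = a
    · obtain ⟨i, hi⟩ := hσ
      refine (le_sup_right : _ ≤ minorIdeal x a (b + 1) ⊔ _) ?_
      set τ : Fin (b + 1) → ℕ := fun k => (σ (Equiv.swap i (Fin.last b) k) : ℕ) with hτ
      have h1 : (rowMat x (b + 1) τ).det = Equiv.Perm.sign (Equiv.swap i (Fin.last b)) *
          (rowMat x (b + 1) (fun i => (σ i : ℕ))).det := by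
        rw [← Matrix.det_permute]; rfl
      have h2 : (rowMat x (b + 1) (fun i => (σ i : ℕ))).det =
          Equiv.Perm.sign (Equiv.swap i (Fin.last b)) * (rowMat x (b + 1) τ).det := by
        rw [h1, ← mul_assoc, ← Int.cast_mul]
        rw [← Units.val_mul, Int.units_mul_self]
        simp
      rw [h2]
      refine Ideal.mul_mem_left _ _ ?_
      have hlast : τ (Fin.last b) = a := by simp [hτ, hi]
      by_cases hT : ∃ k : Fin b, τ k.castSucc = a
      · obtain ⟨k, hk⟩ := hT
        rw [rowMat_det_eq_zero x τ (Fin.castSucc_lt_last k).ne (hk.trans hlast.symm)]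
        exact Ideal.zero_mem _
      · push Not at hT
        have hlt : ∀ k : Fin b, τ k.castSucc < a := fun k =>
          lt_of_le_of_ne (Nat.lt_succ_iff.mp (σ _).2) (hT k)
        refine Ideal.subset_span ⟨fun k => ⟨τ k.castSucc, hlt k⟩, ?_⟩
        rw [lastMinor]
        congr 2
        ext k
        refine Fin.lastCases ?_ (fun k => ?_) k
        · simp [hlast]
        · simp
    · push Not at hσ
      refine (le_sup_left : minorIdeal x a (b + 1) ≤ _) ?_
      exact minor_mem x _ fun i => lt_of_le_of_ne (Nat.lt_succ_iff.mp (σ i).2) (hσ i)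
  · refine sup_le ?_ ?_
    · rw [minorIdeal, Ideal.span_le]
      rintro _ ⟨σ, rfl⟩
      exact minor_mem x _ fun i => (σ i).2.trans (Nat.lt_succ_self a)
    · rw [Ideal.span_le]
      rintro _ ⟨T, rfl⟩
      refine minor_mem x _ fun i => ?_
      refine Fin.lastCases ?_ (fun k => ?_) i
      · simp
      · simpa using (T k).2.trans (Nat.lt_succ_self a)

lemma adjugate_last (x : ℕ → ℕ → B) (b c : ℕ) (T : Fin b → ℕ) :
    (rowMat x (b + 1) (Fin.snoc T c : Fin (b + 1) → ℕ)).adjugate (Fin.last b) (Fin.last b) =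
      (rowMat x b T).det := by
  rw [Matrix.adjugate_fin_succ_eq_det_submatrix]
  have : (-1 : B) ^ ((Fin.last b : ℕ) + (Fin.last b : ℕ)) = 1 := by
    rw [← two_mul, pow_mul]; simp
  rw [this, one_mul]
  congr 1
  ext k l
  simp [rowMat]

lemma sum_adjugate (x : ℕ → ℕ → B) (b c d : ℕ) (T : Fin b → ℕ) :
    ∑ j : Fin (b + 1), x d (j : ℕ) * (rowMat x (b + 1) (Fin.snoc T c : Fin (b + 1) → ℕ)).adjugate j (Fin.last b) =
      (rowMat x (b + 1) (Fin.snoc T d : Fin (b + 1) → ℕ)).det := by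
  rw [Matrix.det_eq_sum_mul_adjugate_row _ (Fin.last b)]
  refine Finset.sum_congr rfl fun j _ => ?_
  rw [Matrix.adjugate_fin_succ_eq_det_submatrix, Matrix.adjugate_fin_succ_eq_det_submatrix]
  congr 1
  · simp [rowMat]
  · congr 2
    ext k l
    simp [rowMat]

lemma minor_sym (x : ℕ → ℕ → B) (a b : ℕ) (T U : Fin b → Fin a) :
    lastMinor x a b T * (rowMat x b (fun i => (U i : ℕ))).det -
      lastMinor x a b U * (rowMat x b (fun i => (T i : ℕ))).det ∈ minorIdeal x a (b + 1) := by
  set WT := rowMat x (b + 1) (Fin.snoc (fun i => (T i : ℕ)) a : Fin (b + 1) → ℕ) with hWT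
  set WU := rowMat x (b + 1) (Fin.snoc (fun i => (U i : ℕ)) a : Fin (b + 1) → ℕ) with hWU
  let v : Fin (b + 1) → B := fun j => WT.adjugate j (Fin.last b)
  have h1 : WU.adjugate.mulVec (WU.mulVec v) (Fin.last b) = WU.det * v (Fin.last b) := by
    rw [Matrix.mulVec_mulVec, Matrix.adjugate_mul, Matrix.smul_mulVec, Matrix.one_mulVec]
    rfl
  have h2 : v (Fin.last b) = (rowMat x b (fun i => (T i : ℕ))).det := adjugate_last x b a _
  have h3 : WU.mulVec v (Fin.last b) = WT.det := by
    have := sum_adjugate x b a a (fun i => (T i : ℕ))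
    rw [← hWT] at this
    rw [← this]
    simp [Matrix.mulVec, dotProduct, hWU, rowMat, v]
  have h4 : ∀ i : Fin b, WU.mulVec v i.castSucc ∈ minorIdeal x a (b + 1) := by
    intro i
    have := sum_adjugate x b a (U i) (fun i => (T i : ℕ))
    rw [← hWT] at this
    have h5 : WU.mulVec v i.castSucc = ∑ j : Fin (b + 1), x (U i) (j : ℕ) * WT.adjugate j (Fin.last b) := by
      simp [Matrix.mulVec, dotProduct, hWU, rowMat, v]
    rw [h5, this]
    refine minor_mem x _ fun k => ?_
    refine Fin.lastCases ?_ (fun k => ?_) k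
    · simp
    · simp
  have h6 : WU.adjugate.mulVec (WU.mulVec v) (Fin.last b) =
      ∑ i : Fin b, WU.adjugate (Fin.last b) i.castSucc * WU.mulVec v i.castSucc +
        (rowMat x b (fun i => (U i : ℕ))).det * WT.det := by
    rw [← h3, ← adjugate_last x b a (fun i => (U i : ℕ)), ← hWU]
    conv_lhs => rw [Matrix.mulVec, dotProduct, Fin.sum_univ_castSucc]
  have h7 : lastMinor x a b T * (rowMat x b (fun i => (U i : ℕ))).det -
      lastMinor x a b U * (rowMat x b (fun i => (T i : ℕ))).det =
      - ∑ i : Fin b, WU.adjugate (Fin.last b) i.castSucc * WU.mulVec v i.castSucc := by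
    rw [← h2]
    change WT.det * _ - WU.det * _ = _
    rw [← h1, h6]
    ring
  rw [h7]
  exact neg_mem (Ideal.sum_mem _ fun i _ => Ideal.mul_mem_left _ _ (h4 i))

end Minors


section DimBound

variable {B : Type} [CommRing B]

lemma dim_quot_le_card [IsLocalRing B] [IsNoetherianRing B] (J : Ideal B) (s : Finset B)
    (hs : ∀ r ∈ s, r ∈ IsLocalRing.maximalIdeal B)
    (h : ∀ P : Ideal B, P.IsPrime → J ≤ P → (∀ r ∈ s, r ∈ P) → IsLocalRing.maximalIdeal B ≤ P) :
    ringKrullDim (B ⧸ J) ≤ (s.card : ℕ) := by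
  classical
  by_cases hJ : J = ⊤
  · have : Subsingleton (B ⧸ J) := Ideal.Quotient.subsingleton_iff.mpr hJ
    rw [ringKrullDim_eq_bot_of_subsingleton]
    exact bot_le
  have : Nontrivial (B ⧸ J) := Ideal.Quotient.nontrivial_iff.mpr hJ
  have : IsLocalRing (B ⧸ J) := .of_surjective' _ Ideal.Quotient.mk_surjective
  have hmap : ∀ r ∈ IsLocalRing.maximalIdeal B,
      Ideal.Quotient.mk J r ∈ IsLocalRing.maximalIdeal (B ⧸ J) := by
    intro r hr
    rw [IsLocalRing.mem_maximalIdeal, mem_nonunits_iff, isUnit_iff_exists_inv]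
    rintro ⟨y, hy⟩
    obtain ⟨t, rfl⟩ := Ideal.Quotient.mk_surjective y
    rw [← map_mul, ← map_one (Ideal.Quotient.mk J), Ideal.Quotient.eq] at hy
    refine (Ideal.ne_top_iff_one _).mp (IsLocalRing.maximalIdeal.isMaximal B).ne_top ?_
    have := Ideal.sub_mem _ (Ideal.mul_mem_right t _ hr) (IsLocalRing.le_maximalIdeal hJ hy)
    simpa using this
  rw [← IsLocalRing.maximalIdeal_height_eq_ringKrullDim]
  have h1 : (IsLocalRing.maximalIdeal (B ⧸ J)).height ≤
      ((s.image (Ideal.Quotient.mk J)).card : ℕ) := by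
    apply Ideal.height_le_card_of_mem_minimalPrimes_span_finset
    refine ⟨⟨inferInstance, ?_⟩, ?_⟩
    · rw [Ideal.span_le]
      intro y hy
      simp only [Finset.coe_image, Set.mem_image, Finset.mem_coe] at hy
      obtain ⟨r, hr, rfl⟩ := hy
      exact hmap r (hs r hr)
    · rintro Q ⟨hQ, hQs⟩ -
      have := h (Q.comap (Ideal.Quotient.mk J)) inferInstance ?_ ?_
      · intro y hy
        obtain ⟨r, rfl⟩ := Ideal.Quotient.mk_surjective y
        refine this ?_
        rw [IsLocalRing.mem_maximalIdeal, mem_nonunits_iff] at hy ⊢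
        exact fun hu => hy (hu.map _)
      · intro r hr
        rw [Ideal.mem_comap, Ideal.Quotient.eq_zero_iff_mem.mpr hr]
        exact Q.zero_mem
      · intro r hr
        exact hQs (Ideal.subset_span (by simpa using ⟨r, hr, rfl⟩))
  have h2 : (IsLocalRing.maximalIdeal (B ⧸ J)).height ≤ (s.card : ℕ) :=
    h1.trans (by exact_mod_cast Finset.card_image_le)
  exact_mod_cast WithBot.coe_le_coe.mpr h2

/-- The band of entries lying on full diagonals of the `a × b` matrix. -/
def InBand (a b i j : ℕ) : Prop := i < a ∧ j < b ∧ j ≤ i ∧ i + b ≤ a + j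

lemma entries_mem (x : ℕ → ℕ → B) {p q a b : ℕ} (ha : a ≤ p) (hb : b ≤ q) (hb1 : 1 ≤ b)
    (P : Ideal B) [P.IsPrime] (hP : minorIdeal x a b ≤ P)
    (h1 : ∀ i j, i < p → j < q → ¬ InBand a b i j → x i j ∈ P)
    (h2 : ∀ i j, InBand a b (i + 1) (j + 1) → x (i + 1) (j + 1) - x i j ∈ P)
    (i j : ℕ) (hi : i < p) (hj : j < q) : x i j ∈ P := by
  have hA : ∀ k j, k + b ≤ a → j < b → x (k + j) j - x k 0 ∈ P := by
    intro k j hk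
    induction j with
    | zero => intro _; simp
    | succ j ih =>
      intro hj
      have := P.add_mem (h2 (k + j) j ⟨by omega, by omega, by omega, by omega⟩) (ih (by omega))
      rw [← add_assoc]
      convert this using 1
      ring
  have hY : ∀ k, k + b ≤ a → x k 0 ∈ P := by
    intro k
    induction k using Nat.strong_induction_on with
    | _ k ih =>
      intro hk
      have hdet := hP (minor_mem x (a := a) (b := b) (fun i => k + i) (fun i => by omega))
      rw [← Ideal.Quotient.eq_zero_iff_mem, RingHom.map_det] at hdet
      rw [Matrix.det_of_isLowerTriangular] at hdet
      · rw [Finset.prod_eq_zero_iff] at hdet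
        obtain ⟨i, -, hi⟩ := hdet
        have h3 : x (k + i) i ∈ P := by
          rw [← Ideal.Quotient.eq_zero_iff_mem]
          simpa [rowMat] using hi
        have := P.sub_mem h3 (hA k i hk i.2)
        simpa using this
      · intro i j hij
        have hij : i < j := hij
        have hij' : (i : ℕ) < j := hij
        simp only [RingHom.mapMatrix_apply, Matrix.map_apply, rowMat, Matrix.of_apply]
        rw [Ideal.Quotient.eq_zero_iff_mem]
        by_cases hb : k + i < j
        · exact h1 _ _ (by omega) (by omega) (fun h => by have := h.2.2.1; omega)
        · have h4 := hA (k + i - j) j (by omega) j.2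
          have h5 := ih (k + i - j) (by omega) (by omega)
          have := P.add_mem h4 h5
          rw [show k + (i : ℕ) - j + j = k + i by omega] at this
          simpa using this
  by_cases hband : InBand a b i j
  · obtain ⟨h3, h4, h5, h6⟩ := hband
    have := P.add_mem (hA (i - j) j (by omega) h4) (hY (i - j) (by omega))
    rw [show i - j + j = i by omega] at this
    simpa using this
  · exact h1 i j hi hj hband

lemma minorIdeal_dim_le [IsLocalRing B] [IsNoetherianRing B] (x : ℕ → ℕ → B) {p q a b : ℕ}
    (hx : ∀ i j, x i j ∈ IsLocalRing.maximalIdeal B)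
    (hm : ∀ P : Ideal B, (∀ i j, i < p → j < q → x i j ∈ P) → IsLocalRing.maximalIdeal B ≤ P)
    (ha : a ≤ p) (hb : b ≤ q) (hab : b ≤ a + 1) :
    ringKrullDim (B ⧸ minorIdeal x a b) ≤ (p * q - (a + 1 - b) : ℕ) := by
  classical
  rcases Nat.eq_zero_or_pos b with rfl | hb1
  · have : Subsingleton (B ⧸ minorIdeal x a 0) :=
      Ideal.Quotient.subsingleton_iff.mpr (minorIdeal_zero x a)
    rw [ringKrullDim_eq_bot_of_subsingleton]
    exact bot_le
  let g : ℕ × ℕ → B := fun t =>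
    if InBand a b t.1 t.2 then x t.1 t.2 - x (t.1 - 1) (t.2 - 1) else x t.1 t.2
  let F : Finset (ℕ × ℕ) := Finset.range p ×ˢ Finset.range q
  let E : Finset (ℕ × ℕ) := Finset.range (a + 1 - b) ×ˢ {0}
  have hE : E ⊆ F := by
    rintro ⟨i, j⟩ h
    simp only [E, F, Finset.mem_product, Finset.mem_range, Finset.mem_singleton] at h ⊢
    omega
  have hcard : (F \ E).card = p * q - (a + 1 - b) := by
    rw [Finset.card_sdiff_of_subset hE]
    simp [E, F]
  have key := dim_quot_le_card (minorIdeal x a b) ((F \ E).image g) ?_ ?_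
  · refine key.trans ?_
    have : ((F \ E).image g).card ≤ p * q - (a + 1 - b) := hcard ▸ Finset.card_image_le
    exact_mod_cast this
  · intro r hr
    obtain ⟨t, -, rfl⟩ := Finset.mem_image.mp hr
    simp only [g]
    split_ifs
    · exact Ideal.sub_mem _ (hx _ _) (hx _ _)
    · exact hx _ _
  · intro P hP hJ hs
    refine hm P (entries_mem x ha hb hb1 P hJ ?_ ?_)
    · intro i j hi hj hband
      have := hs (g (i, j)) (Finset.mem_image_of_mem g ?_)
      · simpa [g, hband] using this
      · simp only [E, F, Finset.mem_sdiff, Finset.mem_product, Finset.mem_range,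
          Finset.mem_singleton]
        refine ⟨⟨hi, hj⟩, ?_⟩
        rintro ⟨h3, rfl⟩
        exact hband ⟨by omega, by omega, by omega, by omega⟩
    · intro i j hband
      have := hs (g (i + 1, j + 1)) (Finset.mem_image_of_mem g ?_)
      · simpa [g, hband] using this
      · obtain ⟨h3, h4, h5, h6⟩ := hband
        simp only [E, F, Finset.mem_sdiff, Finset.mem_product, Finset.mem_range,
          Finset.mem_singleton]
        omega

end DimBound

section MainInduction

variable {B : Type} [CommRing B] [IsLocalRing B] [IsNoetherianRing B]

lemma minorIdeal_depth (x : ℕ → ℕ → B) {p q : ℕ}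
    (hx : ∀ i j, x i j ∈ IsLocalRing.maximalIdeal B)
    (hm : ∀ P : Ideal B, (∀ i j, i < p → j < q → x i j ∈ P) → IsLocalRing.maximalIdeal B ≤ P)
    (hB : DepthGE (B := B) (p * q) B) (b : ℕ) (hb : b ≤ q) (a : ℕ) (ha : a ≤ p)
    (hab : b ≤ a + 1) :
    DepthGE (B := B) (p * q - (a + 1 - b)) (B ⧸ minorIdeal x a b) := by
  induction b generalizing a with
  | zero =>
    have : Subsingleton (B ⧸ minorIdeal x a 0) :=
      Ideal.Quotient.subsingleton_iff.mpr (minorIdeal_zero x a)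
    exact DepthGE.of_subsingleton _
  | succ b ihb =>
    obtain ⟨d, rfl⟩ := Nat.exists_eq_add_of_le (Nat.le_of_succ_le_succ hab)
    clear hab
    induction d with
    | zero =>
      rw [show p * q - (b + 0 + 1 - (b + 1)) = p * q by omega, add_zero, minorIdeal_self_succ]
      exact hB.congr (Submodule.quotEquivOfEqBot ⊥ rfl)
    | succ d ihd =>
      rw [show b + (d + 1) = b + d + 1 by omega, minorIdeal_succ_succ]
      have hpq : b + d + 1 ≤ p * q := by
        have : p * 1 ≤ p * q := Nat.mul_le_mul_left p (by omega)
        omega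
      have e1 : p * q - (b + d + 1 + 1 - (b + 1)) = p * q - (d + 1) := by omega
      rw [e1]
      have h1 := ihd (by omega)
      rw [show p * q - (b + d + 1 - (b + 1)) = p * q - (d + 1) + 1 by omega] at h1
      have h2 := ihb (by omega) (b + d) (by omega) (by omega)
      rw [show b + d + 1 - b = d + 1 by omega] at h2
      have h3 := minorIdeal_dim_le x hx hm (a := b + d) (b := b) (by omega) (by omega) (by omega)
      rw [show b + d + 1 - b = d + 1 by omega] at h3
      have h4 := minorIdeal_dim_le x hx hm (a := b + d + 1) (b := b + 1) (by omega) (by omega)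
        (by omega)
      rw [e1, minorIdeal_succ_succ] at h4
      exact depth_step (minorIdeal x (b + d) (b + 1))
        (fun T : Fin b → Fin (b + d) => (rowMat x b (fun i => (T i : ℕ))).det)
        (lastMinor x (b + d) b) (p * q - (d + 1)) (minorIdeal_succ_le x _ _)
        (minor_sym x _ _) h1 h2 h3 h4

end MainInduction


section Final

open RingTheory.Sequence

lemma mvPolynomial_X_weaklyRegular {σ : Type} (l : List σ) (hl : l.Nodup) :
    IsWeaklyRegular (MvPolynomial σ ℂ)
      (l.map (MvPolynomial.X : σ → MvPolynomial σ ℂ)) := by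
  constructor
  intro i hi
  have hi' : i < l.length := by simpa using hi
  have hI : Ideal.ofList ((l.map (MvPolynomial.X : σ → MvPolynomial σ ℂ)).take i) =
      Ideal.span (MvPolynomial.X '' {t | t ∈ l.take i}) := by
    rw [Ideal.ofList]
    congr 1
    ext y
    simp only [← List.map_take, Set.mem_ofPred_eq, List.mem_map, Set.mem_image]
  have hnot : l[i] ∉ l.take i := by
    intro h
    rw [List.mem_take_iff_getElem] at h
    obtain ⟨j, hj, hji⟩ := h
    have := (List.Nodup.getElem_inj_iff hl).mp hji
    omega
  rw [isSMulRegular_iff_right_eq_zero_of_smul]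
  intro y hy
  obtain ⟨f, rfl⟩ := Submodule.Quotient.mk_surjective _ y
  rw [← Submodule.Quotient.mk_smul, Submodule.Quotient.mk_eq_zero] at hy
  rw [Submodule.Quotient.mk_eq_zero]
  rw [smul_eq_mul, Ideal.mul_top, hI, MvPolynomial.mem_ideal_span_X_image] at hy ⊢
  intro m hm
  obtain ⟨k, hk, hk0⟩ := hy (m + Finsupp.single l[i] 1) (by
    rw [MvPolynomial.mem_support_iff] at hm ⊢
    rw [List.getElem_map, smul_eq_mul, mul_comm, MvPolynomial.coeff_mul_X]
    exact hm)
  refine ⟨k, hk, ?_⟩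
  have : l[i] ≠ k := by
    rintro rfl
    exact hnot hk
  simpa [Finsupp.single_apply, this] using hk0

lemma isCM_of_surjective {B L : Type} [CommRing B] [IsLocalRing B] [IsNoetherianRing B]
    [CommRing L] (φ : B →+* L) (hφ : Function.Surjective φ) (J : Ideal B)
    (hker : RingHom.ker φ = J) (hJ : J ≠ ⊤) (n : ℕ) (hd : DepthGE (B := B) n (B ⧸ J))
    (hdim : ringKrullDim (B ⧸ J) ≤ n) : IsCohenMacaulayLocalRing L := by
  let := φ.toAlgebra
  have hnt : Nontrivial (B ⧸ J) := Ideal.Quotient.nontrivial_iff.mpr hJ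
  subst hker
  let e : (B ⧸ RingHom.ker φ) ≃+* L := RingHom.quotientKerEquivOfSurjective hφ
  have hLn : Nontrivial L := e.injective.nontrivial
  have hL : IsLocalRing L := .of_surjective' φ hφ
  have hN : IsNoetherianRing L := isNoetherianRing_of_surjective B L φ hφ
  obtain ⟨rs, hlen, hrs, hreg⟩ := hd.exists_regular
  let el : (B ⧸ RingHom.ker φ) ≃ₗ[B] L :=
    { e with
      map_smul' := by
        intro b y
        obtain ⟨y, rfl⟩ := Ideal.Quotient.mk_surjective y
        change e (Ideal.Quotient.mk _ (b * y)) = φ b * e (Ideal.Quotient.mk _ y)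
        simp [e] }
  have hregL : IsWeaklyRegular L rs := (el.isWeaklyRegular_congr rs).mp hreg.toIsWeaklyRegular
  have hmem : ∀ r ∈ rs.map φ, r ∈ IsLocalRing.maximalIdeal L := by
    intro r hr
    obtain ⟨b, hb, rfl⟩ := List.mem_map.mp hr
    rw [IsLocalRing.mem_maximalIdeal, mem_nonunits_iff, isUnit_iff_exists_inv]
    rintro ⟨y, hy⟩
    obtain ⟨t, rfl⟩ := hφ y
    have h1 : b * t - 1 ∈ RingHom.ker φ := by
      rw [RingHom.mem_ker, map_sub, map_mul, hy, map_one, sub_self]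
    refine (Ideal.ne_top_iff_one _).mp (IsLocalRing.maximalIdeal.isMaximal B).ne_top ?_
    have := Ideal.sub_mem _ (Ideal.mul_mem_right t _ (hrs b hb))
      (IsLocalRing.le_maximalIdeal hJ h1)
    rwa [sub_sub_cancel] at this
  have hregL' : IsRegular L (rs.map φ) := by
    rw [IsLocalRing.isRegular_iff_isWeaklyRegular_of_subset_maximalIdeal hmem]
    exact (isWeaklyRegular_map_algebraMap_iff L L rs).mpr hregL
  refine ⟨hL, hN, rs.map φ, hmem, hregL', ?_⟩
  rw [List.length_map, hlen, ← ringKrullDim_eq_of_ringEquiv e]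
  refine le_antisymm ?_ hdim
  rw [← hlen]
  exact length_le_of_killed rs hrs hreg.toIsWeaklyRegular (RingHom.ker φ) 1 one_ne_zero
    (fun b hb => by
      rw [Algebra.smul_def, mul_one]
      exact Ideal.Quotient.eq_zero_iff_mem.mpr hb)

lemma minors_le_span_X {p q : ℕ} (hq : 1 ≤ q) : maximalMinorsIdeal p q ≤
    Ideal.span (Set.range (MvPolynomial.X : Fin p × Fin q → MvPolynomial (Fin p × Fin q) ℂ)) := by
  rw [maximalMinorsIdeal, Ideal.span_le]
  rintro _ ⟨σ, rfl⟩
  simp only [SetLike.mem_coe]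
  rw [Matrix.det_eq_sum_mul_adjugate_row _ (⟨0, hq⟩ : Fin q)]
  refine Ideal.sum_mem _ fun j _ => Ideal.mul_mem_right _ _ (Ideal.subset_span ⟨_, rfl⟩)

lemma comap_originIdealMod {p q : ℕ} (hq : 1 ≤ q) :
    (originIdealMod p q).comap (Ideal.Quotient.mk (maximalMinorsIdeal p q)) =
    Ideal.span (Set.range (MvPolynomial.X : Fin p × Fin q → MvPolynomial (Fin p × Fin q) ℂ)) := by
  rw [originIdealMod, Ideal.comap_map_of_surjective _ Ideal.Quotient.mk_surjective,
    ← RingHom.ker_eq_comap_bot, Ideal.mk_ker]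
  exact sup_eq_left.mpr (minors_le_span_X hq)

/-- The entries of the generic matrix, extended by zero and mapped to an algebra. -/
noncomputable def entry (p q : ℕ) (B : Type) [CommRing B]
    [Algebra (MvPolynomial (Fin p × Fin q) ℂ) B] (i j : ℕ) : B :=
  if h : i < p ∧ j < q then
    algebraMap (MvPolynomial (Fin p × Fin q) ℂ) B (MvPolynomial.X (⟨i, h.1⟩, ⟨j, h.2⟩)) else 0

lemma map_minors (p q : ℕ) (B : Type) [CommRing B]
    [Algebra (MvPolynomial (Fin p × Fin q) ℂ) B] :
    (maximalMinorsIdeal p q).map (algebraMap _ B) = minorIdeal (entry p q B) p q := by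
  have key : ∀ σ : Fin q → Fin p, (rowMat (entry p q B) q (fun i => (σ i : ℕ))).det =
      algebraMap _ B ((genericMatrix p q).submatrix σ id).det := by
    intro σ
    rw [RingHom.map_det]
    congr 1
    ext i j
    simp [rowMat, entry, genericMatrix]
  apply le_antisymm
  · rw [maximalMinorsIdeal, Ideal.map_span, Ideal.span_le]
    rintro _ ⟨_, ⟨σ, rfl⟩, rfl⟩
    exact Ideal.subset_span ⟨σ, key σ⟩
  · rw [minorIdeal, Ideal.span_le]
    rintro _ ⟨σ, rfl⟩
    by_cases hσ : Function.Injective σ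
    · simp only [key]
      exact Ideal.mem_map_of_mem _ (Ideal.subset_span ⟨⟨σ, hσ⟩, rfl⟩)
    · simp only [Function.Injective, not_forall] at hσ
      obtain ⟨i, j, h, hij⟩ := hσ
      simp only [SetLike.mem_coe]
      rw [rowMat_det_eq_zero _ _ hij (by rw [h])]
      exact Ideal.zero_mem _

end Final

/-- For `p ≥ q ≥ 1`, the localization of the generic determinantal ring
`R/I` at the maximal ideal `𝔪/I` (where `𝔪 = (x_{ij})` is the ideal of the origin)
is a Cohen–Macaulay local ring. (The primality of `𝔪/I`, needed to form the
localization, is recorded as the hypothesis `hp`.) -/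
theorem determinantalRing_isCohenMacaulay (p q : ℕ) (hq : 1 ≤ q) (hpq : q ≤ p)
    (hp : (originIdealMod p q).IsPrime) :
    IsCohenMacaulayLocalRing
      (@Localization.AtPrime (MvPolynomial (Fin p × Fin q) ℂ ⧸ maximalMinorsIdeal p q) _
        (originIdealMod p q) hp) := by
  classical
  let m := (originIdealMod p q).comap (Ideal.Quotient.mk (maximalMinorsIdeal p q))
  have hmX : m = _ := comap_originIdealMod hq
  let B := Localization.AtPrime m
  let x := entry p q B
  have hBN : IsNoetherianRing B := IsLocalization.isNoetherianRing m.primeCompl B inferInstance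
  have hmax : IsLocalRing.maximalIdeal B = m.map (algebraMap _ B) :=
    (Localization.AtPrime.map_eq_maximalIdeal).symm
  have hXm : ∀ t : Fin p × Fin q, (MvPolynomial.X t : MvPolynomial (Fin p × Fin q) ℂ) ∈ m :=
    fun t => hmX ▸ Ideal.subset_span ⟨t, rfl⟩
  have hx : ∀ i j, x i j ∈ IsLocalRing.maximalIdeal B := by
    intro i j
    simp only [x, entry]
    split_ifs with h
    · rw [hmax]
      exact Ideal.mem_map_of_mem _ (hXm _)
    · exact Ideal.zero_mem _
  have hm : ∀ P : Ideal B, (∀ i j, i < p → j < q → x i j ∈ P) →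
      IsLocalRing.maximalIdeal B ≤ P := by
    intro P hP
    rw [hmax, Ideal.map_le_iff_le_comap]
    refine hmX.le.trans ?_
    rw [Ideal.span_le]
    rintro _ ⟨⟨i, j⟩, rfl⟩
    have := hP i j i.2 j.2
    simpa [x, entry] using this
  have hB : DepthGE (B := B) (p * q) B := by
    have h1 := mvPolynomial_X_weaklyRegular (Finset.univ : Finset (Fin p × Fin q)).toList
      (Finset.nodup_toList _)
    have hmem : ∀ r ∈ (Finset.univ : Finset (Fin p × Fin q)).toList.map
        (MvPolynomial.X : _ → MvPolynomial (Fin p × Fin q) ℂ), r ∈ m := by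
      intro r hr
      obtain ⟨t, -, rfl⟩ := List.mem_map.mp hr
      exact hXm t
    have h2 := RingTheory.Sequence.IsWeaklyRegular.isRegular_of_isLocalization_of_mem B m h1 hmem
    have h3 := DepthGE.of_regular _ (fun r hr => by
      obtain ⟨t, ht, rfl⟩ := List.mem_map.mp hr
      rw [hmax]
      exact Ideal.mem_map_of_mem _ (hmem t ht)) h2
    simpa using h3
  have hdepth := minorIdeal_depth x hx hm hB q le_rfl p le_rfl (by omega)
  have hdim := minorIdeal_dim_le x hx hm (a := p) (b := q) le_rfl le_rfl (by omega)
  have hker : RingHom.ker (Localization.localRingHom m (originIdealMod p q)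
      (Ideal.Quotient.mk (maximalMinorsIdeal p q)) rfl) = minorIdeal x p q := by
    rw [← map_minors]
    have hT : Submonoid.map (Ideal.Quotient.mk (maximalMinorsIdeal p q)) m.primeCompl =
        (originIdealMod p q).primeCompl := by
      exact Submonoid.map_comap_eq_of_surjective Ideal.Quotient.mk_surjective (originIdealMod p q).primeCompl
    have := IsLocalization.ker_map (S := B) (Localization.AtPrime (originIdealMod p q))
      (Ideal.Quotient.mk (maximalMinorsIdeal p q)) hT
    rw [Ideal.mk_ker] at this
    exact this
  refine isCM_of_surjective _ (RingHom.surjective_localRingHom_of_surjective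
    (Ideal.Quotient.mk (maximalMinorsIdeal p q)) Ideal.Quotient.mk_surjective
    (originIdealMod p q)) (minorIdeal x p q) hker ?_ _ hdepth hdim
  rw [← hker]
  exact RingHom.ker_ne_top _
end
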